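/- arXiv:1304.1263 — 3 statements merged into one kernel-verified Lean document; each statement's English description precedes it below -/
import Mathlib

section
/- The number of permutations of {1,...,n} with a given set A ⊆ {1,...,n} of over-diagonal values, a given set B ⊆ {1,...,n} of under-diagonal values (with A, B disjoint and the remaining elements on the diagonal) equals the number of pairs of ordered set compositions A = A_1 ∪ ... ∪ A_k, B = B_1 ∪ ... ∪ B_k into nonempty parts with min A_i > max B_i for all i. -/
/-!
Both counts `N (A, B)` satisfy the same recursion. If some under-value lies below some over-value,
then there are an under-value `x` and an over-value `y` with `x < y` and no further element of
`A ∪ B` between them, and, for `A`, `B` with `y`, `x` removed,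

`N (A ∪ {y}, B ∪ {x}) = N (A ∪ {x}, B ∪ {y}) + N (A ∪ {x}, B) + N (A, B ∪ {y}) + N (A, B)`.

For the inverses `τ` of the permutations this is the bijection `τ ↦ τ * swap x y`: it turns the
condition that `x` jumps to `y` or above and `y` to `x` or below into the condition that `x` does
not move up and `y` does not move down. For compositions, the generating function is `1 / (1 - W)`
in square-free variables, where `W` enumerates single blocks. The recursion follows from
`W_{yx} + W = W_{x∅} + W_{∅y} + 1`, where the subscripts name the elements added to the two parts
of a block. If no under-value lies below an over-value, both counts are `1` for `A = B = ∅` and `0`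
otherwise.
-/

section DisjConv

variable {β R : Type*} [GeneralizedBooleanAlgebra β] [LocallyFiniteOrderBot β] [Semiring R]

/-- The convolution summing `f q * g r` over the decompositions of `p` into disjoint parts `q`
and `r`, that is, the product of generating functions in square-free variables. -/
def disjConv (f g : β → R) (p : β) : R :=
  ∑ q ∈ Finset.Iic p, f q * g (p \ q)

variable {f g h w C : β → R} {p e : β}

lemma disjConv_congr_left (hfg : ∀ q ≤ p, f q = g q) : disjConv f h p = disjConv g h p :=
  Finset.sum_congr rfl fun q hq => by rw [hfg q (Finset.mem_Iic.1 hq)]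

lemma disjConv_congr_right (hgh : ∀ q ≤ p, g q = h q) : disjConv f g p = disjConv f h p :=
  Finset.sum_congr rfl fun q _ => by rw [hgh (p \ q) sdiff_le]

lemma disjConv_add_left : disjConv (f + g) h p = disjConv f h p + disjConv g h p := by
  simp only [disjConv, Pi.add_apply, add_mul, Finset.sum_add_distrib]

lemma disjConv_add_right : disjConv f (g + h) p = disjConv f g p + disjConv f h p := by
  simp only [disjConv, Pi.add_apply, mul_add, Finset.sum_add_distrib]

lemma disjConv_single_bot [DecidableEq β] : disjConv (Pi.single ⊥ 1) f p = f p := by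
  simp [disjConv, Pi.single_apply, sdiff_bot]

lemma Iic_atom_sup [DecidableEq β] (he : IsAtom e) :
    Finset.Iic (e ⊔ p) = Finset.Iic p ∪ (Finset.Iic p).image (e ⊔ ·) := by
  ext q
  simp only [Finset.mem_Iic, Finset.mem_union, Finset.mem_image]
  constructor
  · intro hq
    by_cases heq : e ≤ q
    · exact Or.inr ⟨q \ e, sdiff_le_iff.2 hq, sup_sdiff_cancel_right heq⟩
    · exact Or.inl ((he.not_le_iff_disjoint.1 heq).symm.left_le_of_le_sup_left hq)
  · rintro (hq | ⟨r, hr, rfl⟩)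
    · exact le_sup_of_le_right hq
    · exact sup_le_sup_left hr e

lemma disjConv_atom_sup (he : IsAtom e) (hep : Disjoint e p) :
    disjConv f g (e ⊔ p) = disjConv (f <| e ⊔ ·) g p + disjConv f (g <| e ⊔ ·) p := by
  classical
  have hdisj : ∀ q ∈ Finset.Iic p, Disjoint e q := fun q hq => hep.mono_right (Finset.mem_Iic.1 hq)
  have hinj : Set.InjOn (e ⊔ ·) (Finset.Iic p : Set β) := fun q hq r hr hqr => by
    rw [← (hdisj q hq).sup_sdiff_cancel_left, show e ⊔ q = e ⊔ r from hqr,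
      (hdisj r hr).sup_sdiff_cancel_left]
  have hsplit : Disjoint (Finset.Iic p) ((Finset.Iic p).image (e ⊔ ·)) := by
    simp only [Finset.disjoint_right, Finset.mem_image, Finset.mem_Iic]
    rintro _ ⟨q, -, rfl⟩ hqp
    exact he.1 (disjoint_self.1 (hep.mono_right (le_sup_left.trans hqp)))
  rw [disjConv, Iic_atom_sup he, Finset.sum_union hsplit, Finset.sum_image hinj, add_comm]
  congr 1 <;> refine Finset.sum_congr rfl fun q hq => ?_
  · rw [← sdiff_sdiff_left, hep.sup_sdiff_cancel_left]
  · rw [sup_sdiff, (hdisj q hq).sdiff_eq_left]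

lemma wellFoundedLT_of_locallyFiniteOrderBot (β : Type*) [Preorder β] [LocallyFiniteOrderBot β] :
    WellFoundedLT β :=
  ⟨Subrelation.wf (fun hpq => Finset.card_lt_card (Finset.Iic_ssubset_Iic.2 hpq))
    (measure fun p : β => (Finset.Iic p).card).wf⟩

lemma eq_of_eq_add_disjConv (hw : w ⊥ = 0) (hf : ∀ q ≤ p, f q = h q + disjConv w f q)
    (hg : ∀ q ≤ p, g q = h q + disjConv w g q) : f p = g p := by
  have := wellFoundedLT_of_locallyFiniteOrderBot β
  induction p using WellFoundedLT.induction with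
  | ind p ih =>
    rw [hf p le_rfl, hg p le_rfl]
    congr 1
    refine Finset.sum_congr rfl fun q hq => ?_
    by_cases hq0 : q = ⊥
    · rw [hq0, hw, zero_mul, zero_mul]
    · rw [ih (p \ q) (sdiff_lt (Finset.mem_Iic.1 hq) hq0)
        (fun r hr => hf r (hr.trans sdiff_le)) (fun r hr => hg r (hr.trans sdiff_le))]

/-- `C` is `1 / (1 - w)` for the product `disjConv`, as the equation `C = 1 + w * C`. It enumerates
ordered compositions into blocks of weight `w`. -/
def IsResolvent [DecidableEq β] (w C : β → R) : Prop :=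
  ∀ p, C p = (Pi.single ⊥ 1 : β → R) p + disjConv w C p

namespace IsResolvent

variable [DecidableEq β]

lemma atom_sup (hC : IsResolvent w C) (he : IsAtom e) (hep : Disjoint e p) :
    C (e ⊔ p) = disjConv (w <| e ⊔ ·) C p + disjConv w (C <| e ⊔ ·) p := by
  have hne : e ⊔ p ≠ ⊥ := fun h => he.1 (sup_eq_bot_iff.1 h).1
  rw [hC, Pi.single_eq_of_ne hne, zero_add, disjConv_atom_sup he hep]

lemma atom_sup_congr {e' : β} (hC : IsResolvent w C) (hw : w ⊥ = 0) (he : IsAtom e)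
    (he' : IsAtom e') (hep : Disjoint e p) (hep' : Disjoint e' p)
    (hee' : ∀ q ≤ p, w (e ⊔ q) = w (e' ⊔ q)) : C (e ⊔ p) = C (e' ⊔ p) := by
  refine eq_of_eq_add_disjConv (f := fun q => C (e ⊔ q)) (g := fun q => C (e' ⊔ q)) hw
    (fun q hq => hC.atom_sup he (hep.mono_right hq)) fun q hq => ?_
  rw [disjConv_congr_left fun r hr => hee' r (hr.trans hq)]
  exact hC.atom_sup he' (hep'.mono_right hq)

lemma atom_sup_atom_sup {a b : β} (hC : IsResolvent w C) (ha : IsAtom a) (hb : IsAtom b)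
    (hap : Disjoint a (b ⊔ p)) (hbp : Disjoint b p) :
    C (a ⊔ (b ⊔ p)) =
      disjConv (fun q => w (a ⊔ (b ⊔ q))) C p + disjConv (w <| a ⊔ ·) (C <| b ⊔ ·) p +
        disjConv (w <| b ⊔ ·) (C <| a ⊔ ·) p + disjConv w (fun q => C (a ⊔ (b ⊔ q))) p := by
  rw [hC.atom_sup ha hap, disjConv_atom_sup hb hbp, disjConv_atom_sup hb hbp]
  simp only [add_assoc]

/-- In generating-function terms: if `W + W_{ab} = W_{a'} + W_{b'} + 1` and `C = 1 / (1 - W)`, then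
`W_{ab} * C = (W_{a'} + W_{b'}) * C + (1 - W) * C`. -/
lemma disjConv_eq_add_single [IsLeftCancelAdd R] {u v : β → R} (hC : IsResolvent w C)
    (hkey : ∀ q ≤ p, w q + u q = v q + (Pi.single ⊥ 1 : β → R) q) :
    disjConv u C p = disjConv v C p + (Pi.single ⊥ 1 : β → R) p := by
  refine add_left_cancel (a := disjConv w C p) ?_
  calc disjConv w C p + disjConv u C p
      = disjConv (v + Pi.single ⊥ 1) C p := by
        rw [← disjConv_add_left]
        exact disjConv_congr_left hkey
    _ = disjConv v C p + C p := by rw [disjConv_add_left, disjConv_single_bot]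
    _ = _ := by rw [hC p]; abel

/-- Both sides, as functions of `p`, satisfy the same equation `F = h + w * F`. -/
lemma exchange [IsLeftCancelAdd R] {a b a' b' : β} (hC : IsResolvent w C) (hw : w ⊥ = 0)
    (ha : IsAtom a) (hb : IsAtom b) (ha' : IsAtom a') (hb' : IsAtom b')
    (hap : Disjoint a (b ⊔ p)) (hbp : Disjoint b p)
    (hap' : Disjoint a' (b' ⊔ p)) (hbp' : Disjoint b' p)
    (haa' : ∀ q ≤ p, w (a ⊔ q) = w (a' ⊔ q)) (hbb' : ∀ q ≤ p, w (b ⊔ q) = w (b' ⊔ q))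
    (hzero : ∀ q ≤ p, w (a' ⊔ (b' ⊔ q)) = 0)
    (hkey : ∀ q ≤ p, w q + w (a ⊔ (b ⊔ q)) =
      w (a' ⊔ q) + w (b' ⊔ q) + (Pi.single ⊥ 1 : β → R) q) :
    C (a ⊔ (b ⊔ p)) = C (a' ⊔ (b' ⊔ p)) + C (a' ⊔ p) + C (b' ⊔ p) + C p := by
  refine eq_of_eq_add_disjConv (f := fun q => C (a ⊔ (b ⊔ q)))
    (g := (fun q => C (a' ⊔ (b' ⊔ q))) + (C <| a' ⊔ ·) + (C <| b' ⊔ ·) + C) hw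
    (fun q hq => hC.atom_sup_atom_sup ha hb (hap.mono_right (sup_le_sup_left hq b))
      (hbp.mono_right hq)) fun q hq => ?_
  have haq : Disjoint a q := hap.mono_right (le_sup_of_le_right hq)
  have haq' : Disjoint a' q := hap'.mono_right (le_sup_of_le_right hq)
  have hbq : Disjoint b q := hbp.mono_right hq
  have hbq' : Disjoint b' q := hbp'.mono_right hq
  have hCa : ∀ r ≤ q, C (a ⊔ r) = C (a' ⊔ r) := fun r hr =>
    hC.atom_sup_congr hw ha ha' (haq.mono_right hr) (haq'.mono_right hr)
      fun s hs => haa' s (hs.trans (hr.trans hq))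
  have hCb : ∀ r ≤ q, C (b ⊔ r) = C (b' ⊔ r) := fun r hr =>
    hC.atom_sup_congr hw hb hb' (hbq.mono_right hr) (hbq'.mono_right hr)
      fun s hs => hbb' s (hs.trans (hr.trans hq))
  have hsame := hC.disjConv_eq_add_single (u := fun r => w (a ⊔ (b ⊔ r)))
    (v := (w <| a' ⊔ ·) + (w <| b' ⊔ ·)) fun r hr => hkey r (hr.trans hq)
  have hzero' : disjConv (fun r => w (a' ⊔ (b' ⊔ r))) C q = 0 :=
    Finset.sum_eq_zero fun r hr =>
      mul_eq_zero_of_left (hzero r ((Finset.mem_Iic.1 hr).trans hq)) _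
  rw [hsame, disjConv_congr_left fun r hr => haa' r (hr.trans hq),
    disjConv_congr_left fun r hr => hbb' r (hr.trans hq), disjConv_congr_right hCa,
    disjConv_congr_right hCb]
  simp only [disjConv_add_left, disjConv_add_right, Pi.add_apply]
  rw [hC.atom_sup_atom_sup ha' hb' (hap'.mono_right (sup_le_sup_left hq b')) hbq', hzero',
    hC.atom_sup ha' haq', hC.atom_sup hb' hbq', hC q]
  abel

end IsResolvent

end DisjConv

section Compositions

variable {β : Type*} [GeneralizedBooleanAlgebra β]

/-- `L` is an ordered composition of `p` into pairwise disjoint blocks satisfying `V`. -/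
def IsBlockComposition (V : β → Prop) (p : β) (L : List β) : Prop :=
  (∀ q ∈ L, V q) ∧ L.Pairwise Disjoint ∧ L.foldr (· ⊔ ·) ⊥ = p

/-- The number of compositions of `p` into blocks satisfying `V`. If `V ⊥` holds, empty blocks can
be repeated and this may be the junk value `0`. -/
noncomputable def numCompositions (V : β → Prop) (p : β) : ℕ :=
  Nat.card {L // IsBlockComposition V p L}

variable {V : β → Prop} {p q : β} {L : List β}

lemma disjoint_foldr_sup : Disjoint q (L.foldr (· ⊔ ·) ⊥) ↔ ∀ r ∈ L, Disjoint q r := by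
  induction L with
  | nil => simp
  | cons r L ih => simp [ih]

lemma isBlockComposition_nil : IsBlockComposition V p [] ↔ p = ⊥ := by
  simp [IsBlockComposition, eq_comm]

lemma disjoint_and_sup_eq_iff {r : β} : Disjoint q r ∧ q ⊔ r = p ↔ q ≤ p ∧ r = p \ q := by
  constructor
  · rintro ⟨hqr, rfl⟩
    exact ⟨le_sup_left, hqr.sup_sdiff_cancel_left.symm⟩
  · rintro ⟨hqp, rfl⟩
    exact ⟨disjoint_sdiff_self_right, sup_sdiff_cancel_right hqp⟩

lemma isBlockComposition_cons :
    IsBlockComposition V p (q :: L) ↔ (q ≤ p ∧ V q) ∧ IsBlockComposition V (p \ q) L := by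
  have hsplit := disjoint_and_sup_eq_iff (p := p) (q := q) (r := L.foldr (· ⊔ ·) ⊥)
  rw [disjoint_foldr_sup] at hsplit
  simp only [IsBlockComposition, List.forall_mem_cons, List.pairwise_cons, List.foldr_cons]
  tauto

/-- A composition of `p` is empty, with `p = ⊥`, or consists of a first block `q` and a composition
of `p \ q`. -/
def blockCompositionEquiv (V : β → Prop) (p : β) :
    {L // IsBlockComposition V p L} ≃
      PLift (p = ⊥) ⊕ Σ q : {q // q ≤ p ∧ V q}, {L // IsBlockComposition V (p \ q) L} where
  toFun
    | ⟨[], h⟩ => .inl ⟨isBlockComposition_nil.1 h⟩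
    | ⟨q :: L, h⟩ =>
      .inr ⟨⟨q, (isBlockComposition_cons.1 h).1⟩, L, (isBlockComposition_cons.1 h).2⟩
  invFun
    | .inl h => ⟨[], isBlockComposition_nil.2 h.down⟩
    | .inr ⟨q, L⟩ => ⟨q :: L, isBlockComposition_cons.2 ⟨q.2, L.2⟩⟩
  left_inv
    | ⟨[], _⟩ => rfl
    | ⟨_ :: _, _⟩ => rfl
  right_inv
    | .inl _ => rfl
    | .inr _ => rfl

variable [LocallyFiniteOrderBot β]

lemma finite_isBlockComposition (hV : ¬ V ⊥) (p : β) :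
    Finite {L // IsBlockComposition V p L} := by
  have := wellFoundedLT_of_locallyFiniteOrderBot β
  induction p using WellFoundedLT.induction with
  | ind p ih =>
    have hblock : Finite {q // q ≤ p ∧ V q} :=
      ((Set.finite_Iic p).subset fun q hq => hq.1).to_subtype
    have htail (q : {q // q ≤ p ∧ V q}) : Finite {L // IsBlockComposition V (p \ q) L} :=
      ih _ (sdiff_lt q.2.1 fun hq => hV (hq ▸ q.2.2))
    exact .of_equiv _ (blockCompositionEquiv V p).symm

lemma isResolvent_numCompositions [DecidableEq β] [DecidablePred V] (hV : ¬ V ⊥) :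
    IsResolvent (fun q => if V q then 1 else 0) (numCompositions V) := by
  intro p
  have hfin := finite_isBlockComposition hV
  have hmem (q : β) : q ∈ (Finset.Iic p).filter V ↔ q ≤ p ∧ V q := by simp
  let _ := Fintype.subtype _ hmem
  rw [numCompositions, Nat.card_congr (blockCompositionEquiv V p), Nat.card_sum, Nat.card_sigma]
  congr 1
  · by_cases hp : p = ⊥ <;> simp [hp]
  · simp only [disjConv, ite_mul, one_mul, zero_mul]
    rw [← Finset.sum_filter]
    exact (Finset.sum_subtype _ hmem fun q => numCompositions V (p \ q)).symm

end Compositions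

section OverUnderBlocks

variable {α : Type*} [LinearOrder α] {A B : Finset α} {x y : α}

/-- A block `q = (Aᵢ, Bᵢ)`: both parts are nonempty and `min Aᵢ > max Bᵢ`. -/
def IsOverUnderBlock (q : Finset α × Finset α) : Prop :=
  q.1.Nonempty ∧ q.2.Nonempty ∧ ∀ b ∈ q.2, ∀ a ∈ q.1, b < a

instance : DecidablePred (IsOverUnderBlock (α := α)) :=
  fun _ => inferInstanceAs (Decidable (_ ∧ _ ∧ _))

lemma not_isOverUnderBlock_bot : ¬ IsOverUnderBlock (⊥ : Finset α × Finset α) :=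
  fun h => Finset.not_nonempty_empty h.1

lemma isBlockComposition_isOverUnderBlock_iff {L : List (Finset α × Finset α)} :
    IsBlockComposition IsOverUnderBlock (A, B) L ↔
      (∀ p ∈ L, p.1.Nonempty ∧ p.2.Nonempty ∧ ∀ b ∈ p.2, ∀ a ∈ p.1, b < a) ∧
        (L.map Prod.fst).Pairwise Disjoint ∧
        (L.map Prod.snd).Pairwise Disjoint ∧
        (L.map Prod.fst).foldr (· ∪ ·) ∅ = A ∧
        (L.map Prod.snd).foldr (· ∪ ·) ∅ = B := by
  have hfold : L.foldr (· ⊔ ·) ⊥ =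
      ((L.map Prod.fst).foldr (· ∪ ·) ∅, (L.map Prod.snd).foldr (· ∪ ·) ∅) := by
    induction L with
    | nil => rfl
    | cons q L ih => simp only [List.foldr_cons, List.map_cons, ih]; rfl
  have hdisj : L.Pairwise Disjoint ↔
      (L.map Prod.fst).Pairwise Disjoint ∧ (L.map Prod.snd).Pairwise Disjoint := by
    rw [List.pairwise_map, List.pairwise_map, ← List.pairwise_and_iff]
    exact List.Pairwise.iff fun _ _ => Prod.disjoint_iff
  simp only [IsBlockComposition, IsOverUnderBlock, hfold, hdisj, Prod.mk.injEq, and_assoc]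

lemma isAtom_prodMk_bot {β γ : Type*} [PartialOrder β] [OrderBot β] [PartialOrder γ] [OrderBot γ]
    {b : β} (hb : IsAtom b) : IsAtom (b, (⊥ : γ)) := by
  refine ⟨fun h => hb.1 (congrArg Prod.fst h), fun ⟨b', c⟩ h => ?_⟩
  rcases Prod.mk_lt_mk.1 h with h | h
  · exact Prod.ext (hb.2 _ h.1) (le_bot_iff.1 h.2)
  · exact absurd h.2 not_lt_bot

lemma isAtom_bot_prodMk {β γ : Type*} [PartialOrder β] [OrderBot β] [PartialOrder γ] [OrderBot γ]
    {c : γ} (hc : IsAtom c) : IsAtom ((⊥ : β), c) := by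
  refine ⟨fun h => hc.1 (congrArg Prod.snd h), fun ⟨b, c'⟩ h => ?_⟩
  rcases Prod.mk_lt_mk.1 h with h | h
  · exact absurd h.1 not_lt_bot
  · exact Prod.ext (le_bot_iff.1 h.1) (hc.2 _ h.2)

lemma isOverUnderBlock_insert_left_congr (hxy : x < y) (hB : ∀ z ∈ B, z ∉ Set.Icc x y) :
    IsOverUnderBlock (insert y A, B) ↔ IsOverUnderBlock (insert x A, B) := by
  simp only [IsOverUnderBlock, Finset.insert_nonempty, Finset.forall_mem_insert, Set.mem_Icc] at *
  grind

lemma isOverUnderBlock_insert_right_congr (hxy : x < y) (hA : ∀ z ∈ A, z ∉ Set.Icc x y) :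
    IsOverUnderBlock (A, insert x B) ↔ IsOverUnderBlock (A, insert y B) := by
  simp only [IsOverUnderBlock, Finset.insert_nonempty, Finset.forall_mem_insert, Set.mem_Icc] at *
  grind

lemma not_isOverUnderBlock_insert_insert (hxy : x < y) :
    ¬ IsOverUnderBlock (insert x A, insert y B) := fun h =>
  (h.2.2 y (Finset.mem_insert_self y B) x (Finset.mem_insert_self x A)).not_gt hxy

lemma indicator_isOverUnderBlock_insert_insert (hxy : x < y)
    (hA : ∀ z ∈ A, z ∉ Set.Icc x y) (hB : ∀ z ∈ B, z ∉ Set.Icc x y) :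
    (if IsOverUnderBlock (A, B) then 1 else 0) +
        (if IsOverUnderBlock (insert y A, insert x B) then 1 else 0) =
      (if IsOverUnderBlock (insert x A, B) then 1 else 0) +
        (if IsOverUnderBlock (A, insert y B) then 1 else 0) +
        if A = ∅ ∧ B = ∅ then 1 else 0 := by
  have hB' : ∀ b ∈ B, (b < y ↔ b < x) := by grind
  have hA' : ∀ a ∈ A, (x < a ↔ y < a) := by grind
  rcases A.eq_empty_or_nonempty with rfl | hAne
  · rcases B.eq_empty_or_nonempty with rfl | hBne
    · simp [IsOverUnderBlock, hxy]
    · simp +contextual [IsOverUnderBlock, hxy, hB', hBne, hBne.ne_empty]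
  rcases B.eq_empty_or_nonempty with rfl | hBne
  · simp +contextual [IsOverUnderBlock, hxy, hA', hAne, hAne.ne_empty]
  -- Inclusion-exclusion for the conditions `max B < x` and `y < min A`.
  have hcover : (∀ b ∈ B, ∀ a ∈ A, b < a) → (∀ b ∈ B, b < x) ∨ ∀ a ∈ A, y < a := by grind
  have hboth : IsOverUnderBlock (insert y A, insert x B) ↔
      (∀ b ∈ B, ∀ a ∈ A, b < a) ∧ (∀ b ∈ B, b < x) ∧ ∀ a ∈ A, y < a := by
    simp +contextual only [IsOverUnderBlock, Finset.insert_nonempty, Finset.forall_mem_insert, hA',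
      hB', hxy, forall_and, true_and]
    grind
  have hleft : IsOverUnderBlock (insert x A, B) ↔
      (∀ b ∈ B, ∀ a ∈ A, b < a) ∧ ∀ b ∈ B, b < x := by
    simp only [IsOverUnderBlock, Finset.insert_nonempty, hBne, Finset.forall_mem_insert,
      forall_and, true_and]
    grind
  have hright : IsOverUnderBlock (A, insert y B) ↔
      (∀ b ∈ B, ∀ a ∈ A, b < a) ∧ ∀ a ∈ A, y < a := by
    simp only [IsOverUnderBlock, Finset.insert_nonempty, hAne, Finset.forall_mem_insert, true_and]
    grind
  have hnone : IsOverUnderBlock (A, B) ↔ ∀ b ∈ B, ∀ a ∈ A, b < a := by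
    simp only [IsOverUnderBlock, hAne, hBne, true_and]
  simp only [hboth, hleft, hright, hnone, hAne.ne_empty, false_and, if_false, add_zero]
  by_cases hAB : ∀ b ∈ B, ∀ a ∈ A, b < a
  · rcases hcover hAB with hmax | hmin
    · simp only [eq_true hAB, eq_true hmax, true_and, if_true]
    · simp only [eq_true hAB, eq_true hmin, and_true, true_and, if_true, add_comm]
  · simp only [hAB, false_and, if_false]

lemma numCompositions_exchange (hxy : x < y) (hgap : ∀ z ∈ A ∪ B, z ∉ Set.Icc x y) :
    numCompositions IsOverUnderBlock (insert y A, insert x B) =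
      numCompositions IsOverUnderBlock (insert x A, insert y B) +
        numCompositions IsOverUnderBlock (insert x A, B) +
        numCompositions IsOverUnderBlock (A, insert y B) +
        numCompositions IsOverUnderBlock (A, B) := by
  have hx : x ∉ A ∪ B := fun h => hgap x h (Set.left_mem_Icc.2 hxy.le)
  have hy : y ∉ A ∪ B := fun h => hgap y h (Set.right_mem_Icc.2 hxy.le)
  rw [Finset.notMem_union] at hx hy
  have hgapA : ∀ q ≤ (A, B), ∀ z ∈ q.1, z ∉ Set.Icc x y := fun q hq z hz =>
    hgap z (Finset.mem_union_left _ (hq.1 hz))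
  have hgapB : ∀ q ≤ (A, B), ∀ z ∈ q.2, z ∉ Set.Icc x y := fun q hq z hz =>
    hgap z (Finset.mem_union_right _ (hq.2 hz))
  have hA (z : α) (q : Finset α × Finset α) : ({z}, ⊥) ⊔ q = (insert z q.1, q.2) :=
    Prod.ext rfl (bot_sup_eq q.2)
  have hB (z : α) (q : Finset α × Finset α) : (⊥, {z}) ⊔ q = (q.1, insert z q.2) :=
    Prod.ext (bot_sup_eq q.1) rfl
  have h := (isResolvent_numCompositions not_isOverUnderBlock_bot).exchange (p := (A, B))
    (if_neg not_isOverUnderBlock_bot)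
    (isAtom_prodMk_bot (Finset.isAtom_singleton y)) (isAtom_bot_prodMk (Finset.isAtom_singleton x))
    (isAtom_prodMk_bot (Finset.isAtom_singleton x)) (isAtom_bot_prodMk (Finset.isAtom_singleton y))
    (by simp [Prod.disjoint_iff, hy]) (by simp [Prod.disjoint_iff, hx])
    (by simp [Prod.disjoint_iff, hx]) (by simp [Prod.disjoint_iff, hy])
    (fun q hq => by simp only [hA, isOverUnderBlock_insert_left_congr hxy (hgapB q hq)])
    (fun q hq => by simp only [hB, isOverUnderBlock_insert_right_congr hxy (hgapA q hq)])
    (fun q _ => by simp only [hA, hB, not_isOverUnderBlock_insert_insert hxy, if_false])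
    (fun q hq => by
      simp only [hA, hB, Pi.single_apply, Prod.ext_iff]
      exact indicator_isOverUnderBlock_insert_insert hxy (hgapA q hq) (hgapB q hq))
  simpa only [hA, hB] using h

lemma numCompositions_of_forall_le (h : ∀ b ∈ B, ∀ a ∈ A, a ≤ b) :
    numCompositions IsOverUnderBlock (A, B) = if A = ∅ ∧ B = ∅ then 1 else 0 := by
  have hzero : ∀ q ≤ (A, B), ¬ IsOverUnderBlock q := by
    rintro ⟨A', B'⟩ hq ⟨⟨a, ha⟩, ⟨b, hb⟩, hlt⟩
    exact (h b (hq.2 hb) a (hq.1 ha)).not_gt (hlt b hb a ha)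
  rw [isResolvent_numCompositions not_isOverUnderBlock_bot, disjConv, Finset.sum_eq_zero, add_zero]
  · simp only [Pi.single_apply, Prod.ext_iff, Prod.fst_bot, Prod.snd_bot, Finset.bot_eq_empty]
  · intro q hq
    rw [if_neg (hzero q (Finset.mem_Iic.1 hq)), zero_mul]

end OverUnderBlocks

section Perms

variable {α : Type*} [LinearOrder α] {A B : Finset α} {x y : α}

open Equiv

/-- The permutations that move exactly the elements of `A` down and those of `B` up. The
permutations with over-diagonal values `A` and under-diagonal values `B` are their inverses. -/
def permsMovingDownUp (A B : Finset α) : Set (Perm α) :=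
  {τ | ∀ v, (τ v < v ↔ v ∈ A) ∧ (v < τ v ↔ v ∈ B)}

variable {τ : Perm α}

lemma mem_permsMovingDownUp_iff_of_ne (x y : α) : τ ∈ permsMovingDownUp A B ↔
    (∀ v, v ≠ x → v ≠ y → (τ v < v ↔ v ∈ A) ∧ (v < τ v ↔ v ∈ B)) ∧
      ((τ x < x ↔ x ∈ A) ∧ (x < τ x ↔ x ∈ B)) ∧ ((τ y < y ↔ y ∈ A) ∧ (y < τ y ↔ y ∈ B)) := by
  refine ⟨fun h => ⟨fun v _ _ => h v, h x, h y⟩, fun ⟨h, hx, hy⟩ v => ?_⟩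
  rcases eq_or_ne v x with rfl | hvx
  · exact hx
  rcases eq_or_ne v y with rfl | hvy
  · exact hy
  exact h v hvx hvy

lemma apply_eq_self_of_mem_permsMovingDownUp {v : α}
    (hτ : τ ∈ permsMovingDownUp A B) (hA : v ∉ A) (hB : v ∉ B) : τ v = v :=
  le_antisymm (not_lt.1 (mt (hτ v).2.1 hB)) (not_lt.1 (mt (hτ v).1.1 hA))

lemma apply_mem_union_of_mem_permsMovingDownUp {v : α}
    (hτ : τ ∈ permsMovingDownUp A B) (hv : τ v ≠ v) : τ v ∈ A ∪ B := by
  by_contra h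
  rw [Finset.mem_union, not_or] at h
  exact hv (τ.injective (apply_eq_self_of_mem_permsMovingDownUp hτ h.1 h.2))

lemma disjoint_permsMovingDownUp {A' B' : Finset α} (h : A ≠ A' ∨ B ≠ B') :
    Disjoint (permsMovingDownUp A B) (permsMovingDownUp A' B') := by
  refine Set.disjoint_left.2 fun τ hτ hτ' => ?_
  rcases h with h | h
  · exact h (Finset.ext fun v => (hτ v).1.symm.trans (hτ' v).1)
  · exact h (Finset.ext fun v => (hτ v).2.symm.trans (hτ' v).2)

lemma mem_permsMovingDownUp_union_iff (hxy : x < y) (hx : x ∉ A ∪ B) (hy : y ∉ A ∪ B) :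
    τ ∈ permsMovingDownUp (insert x A) (insert y B) ∪ permsMovingDownUp (insert x A) B ∪
        permsMovingDownUp A (insert y B) ∪ permsMovingDownUp A B ↔
      (∀ v, v ≠ x → v ≠ y → (τ v < v ↔ v ∈ A) ∧ (v < τ v ↔ v ∈ B)) ∧ τ x ≤ x ∧ y ≤ τ y := by
  rw [Finset.notMem_union] at hx hy
  simp +contextual only [Set.mem_union, mem_permsMovingDownUp_iff_of_ne x y, Finset.mem_insert,
    false_or, hx, hy, hxy.ne, hxy.ne', or_false, iff_false, not_lt, iff_true]
  simp only [← and_or_left, or_assoc]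
  refine and_congr_right fun _ => ⟨by grind, fun ⟨hτx, hτy⟩ => ?_⟩
  rcases hτx.lt_or_eq with hτx | hτx
  all_goals rcases hτy.lt_or_eq' with hτy | hτy
  all_goals simp [hτx, hτy, hτx.le, hτy.le]

lemma le_or_le_apply_of_mem_permsMovingDownUp {v : α} (hgap : ∀ z ∈ A ∪ B, z ∉ Set.Icc x y)
    (hτ : τ ∈ permsMovingDownUp (insert y A) (insert x B)) (hv : τ v ≠ v) :
    τ v ≤ x ∨ y ≤ τ v := by
  have hmem := apply_mem_union_of_mem_permsMovingDownUp hτ hv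
  have hnot := hgap (τ v)
  simp only [Finset.mem_union, Finset.mem_insert] at hmem
  grind

lemma mem_permsMovingDownUp_insert_insert_iff (hxy : x < y)
    (hgap : ∀ z ∈ A ∪ B, z ∉ Set.Icc x y) :
    τ ∈ permsMovingDownUp (insert y A) (insert x B) ↔
      (∀ v, v ≠ x → v ≠ y → (τ v < v ↔ v ∈ A) ∧ (v < τ v ↔ v ∈ B)) ∧ τ y ≤ x ∧ y ≤ τ x := by
  constructor
  · intro h
    have hx : x < τ x := (h x).2.2 (Finset.mem_insert_self x B)
    have hy : τ y < y := (h y).1.2 (Finset.mem_insert_self y A)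
    have hτy := (le_or_le_apply_of_mem_permsMovingDownUp hgap h hy.ne).resolve_right hy.not_ge
    have hτx := (le_or_le_apply_of_mem_permsMovingDownUp hgap h hx.ne').resolve_left hx.not_ge
    refine ⟨fun v hvx hvy => ?_, hτy, hτx⟩
    simpa [hvx, hvy] using h v
  · rintro ⟨h, hτy, hτx⟩
    have hx : x ∉ A := fun h =>
      hgap x (Finset.mem_union_left B h) (Set.left_mem_Icc.2 hxy.le)
    have hy : y ∉ B := fun h =>
      hgap y (Finset.mem_union_right A h) (Set.right_mem_Icc.2 hxy.le)
    have hτy' : τ y < y := hτy.trans_lt hxy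
    have hτx' : x < τ x := hxy.trans_le hτx
    rw [mem_permsMovingDownUp_iff_of_ne x y]
    refine ⟨fun v hvx hvy => ?_, ?_, ?_⟩
    · simpa [hvx, hvy] using h v hvx hvy
    · simp [hτx', hτx'.not_gt, hx, hxy.ne]
    · simp [hτy', hτy'.not_gt, hy, hxy.ne']

lemma encard_permsMovingDownUp_exchange (hxy : x < y) (hgap : ∀ z ∈ A ∪ B, z ∉ Set.Icc x y) :
    (permsMovingDownUp (insert y A) (insert x B)).encard =
      (permsMovingDownUp (insert x A) (insert y B)).encard +
        (permsMovingDownUp (insert x A) B).encard +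
        (permsMovingDownUp A (insert y B)).encard + (permsMovingDownUp A B).encard := by
  have hx : x ∉ A ∪ B := fun h => hgap x h (Set.left_mem_Icc.2 hxy.le)
  have hy : y ∉ A ∪ B := fun h => hgap y h (Set.right_mem_Icc.2 hxy.le)
  have hpre : permsMovingDownUp (insert y A) (insert x B) = (· * swap x y) ⁻¹'
      (permsMovingDownUp (insert x A) (insert y B) ∪ permsMovingDownUp (insert x A) B ∪
        permsMovingDownUp A (insert y B) ∪ permsMovingDownUp A B) := by
    ext τ
    rw [Set.mem_preimage, mem_permsMovingDownUp_union_iff hxy hx hy,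
      mem_permsMovingDownUp_insert_insert_iff hxy hgap, Perm.mul_apply, Perm.mul_apply,
      swap_apply_left, swap_apply_right]
    refine and_congr_left' (forall₃_congr fun v hvx hvy => ?_)
    rw [Perm.mul_apply, swap_apply_of_ne_of_ne hvx hvy]
  rw [Finset.notMem_union] at hx hy
  have hxA : insert x A ≠ A := Finset.insert_ne_self.2 hx.1
  have hyB : insert y B ≠ B := Finset.insert_ne_self.2 hy.2
  rw [hpre, Set.encard_preimage_of_bijective (Group.mulRight_bijective _), Set.encard_union_eq,
    Set.encard_union_eq, Set.encard_union_eq]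
  · exact disjoint_permsMovingDownUp (.inr hyB)
  · exact Set.disjoint_union_left.2
      ⟨disjoint_permsMovingDownUp (.inl hxA), disjoint_permsMovingDownUp (.inl hxA)⟩
  · exact Set.disjoint_union_left.2 ⟨Set.disjoint_union_left.2
      ⟨disjoint_permsMovingDownUp (.inl hxA), disjoint_permsMovingDownUp (.inl hxA)⟩,
      disjoint_permsMovingDownUp (.inr hyB)⟩

lemma permsMovingDownUp_empty : permsMovingDownUp (∅ : Finset α) ∅ = {1} := by
  ext τ
  simp [permsMovingDownUp, Equiv.ext_iff, ← le_antisymm_iff, eq_comm]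

lemma eq_empty_of_mem_permsMovingDownUp (hτ : τ ∈ permsMovingDownUp A B)
    (h : ∀ b ∈ B, ∀ a ∈ A, a ≤ b) : A = ∅ ∧ B = ∅ := by
  constructor
  · by_contra hA
    obtain ⟨m, hm, hmin⟩ := A.exists_minimal (Finset.nonempty_iff_ne_empty.2 hA)
    have hlt : τ m < m := (hτ m).1.2 hm
    rcases Finset.mem_union.1 (apply_mem_union_of_mem_permsMovingDownUp hτ hlt.ne) with hA | hB
    · exact (hmin hA hlt.le).not_gt hlt
    · exact (h _ hB m hm).not_gt hlt
  · by_contra hB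
    obtain ⟨m, hm, hmax⟩ := B.exists_maximal (Finset.nonempty_iff_ne_empty.2 hB)
    have hlt : m < τ m := (hτ m).2.2 hm
    rcases Finset.mem_union.1 (apply_mem_union_of_mem_permsMovingDownUp hτ hlt.ne') with hA | hB
    · exact (h m hm _ hA).not_gt hlt
    · exact (hmax hB hlt.le).not_gt hlt

lemma encard_permsMovingDownUp_of_forall_le (h : ∀ b ∈ B, ∀ a ∈ A, a ≤ b) :
    (permsMovingDownUp A B).encard = if A = ∅ ∧ B = ∅ then 1 else 0 := by
  split_ifs with hAB
  · rw [hAB.1, hAB.2, permsMovingDownUp_empty, Set.encard_singleton]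
  · rw [Set.encard_eq_zero, Set.eq_empty_iff_forall_notMem]
    exact fun τ hτ => hAB (eq_empty_of_mem_permsMovingDownUp hτ h)

lemma exists_insert_insert_of_exists_lt (hAB : Disjoint A B) (h : ∃ b ∈ B, ∃ a ∈ A, b < a) :
    ∃ A' B' x y, x < y ∧ (∀ z ∈ A' ∪ B', z ∉ Set.Icc x y) ∧ insert y A' = A ∧ insert x B' = B := by
  obtain ⟨x, hx, hxmax⟩ := (B.filter fun b => ∃ a ∈ A, b < a).exists_maximal
    (h.imp fun b hb => Finset.mem_filter.2 hb)
  obtain ⟨hxB, a, ha, hxa⟩ := Finset.mem_filter.1 hx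
  obtain ⟨y, hy, hymin⟩ := (A.filter (x < ·)).exists_minimal ⟨a, Finset.mem_filter.2 ⟨ha, hxa⟩⟩
  obtain ⟨hyA, hxy⟩ := Finset.mem_filter.1 hy
  refine ⟨A.erase y, B.erase x, x, y, hxy, fun z hz ⟨hxz, hzy⟩ => ?_, Finset.insert_erase hyA,
    Finset.insert_erase hxB⟩
  rcases Finset.mem_union.1 hz with hz | hz
  · obtain ⟨hne, hzA⟩ := Finset.mem_erase.1 hz
    have hxz' : x < z := hxz.lt_of_ne (Finset.disjoint_left.1 hAB hzA <| · ▸ hxB)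
    exact hne (hzy.antisymm (hymin (Finset.mem_filter.2 ⟨hzA, hxz'⟩) hzy))
  · obtain ⟨hne, hzB⟩ := Finset.mem_erase.1 hz
    have hzy' : z < y := hzy.lt_of_ne (Finset.disjoint_left.1 hAB hyA <| · ▸ hzB)
    exact hne ((hxmax (Finset.mem_filter.2 ⟨hzB, y, hyA, hzy'⟩) hxz).antisymm hxz)

/-- The sum over `A` of the ranks in `V`. It decreases when an element of `A` is removed or replaced
by a smaller one, which is the measure for `exchange_induction`. -/
def rankSum (V A : Finset α) : ℕ := ∑ a ∈ A, (V.filter (· ≤ a)).card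

variable {V : Finset α}

lemma rankSum_lt_rankSum_insert (hyV : y ∈ V) (hyA : y ∉ A) :
    rankSum V A < rankSum V (insert y A) := by
  rw [rankSum, rankSum, Finset.sum_insert hyA, lt_add_iff_pos_left, Finset.card_pos]
  exact ⟨y, Finset.mem_filter.2 ⟨hyV, le_rfl⟩⟩

lemma rankSum_insert_lt_rankSum_insert (hxy : x < y) (hyV : y ∈ V) (hxA : x ∉ A) (hyA : y ∉ A) :
    rankSum V (insert x A) < rankSum V (insert y A) := by
  rw [rankSum, rankSum, Finset.sum_insert hxA, Finset.sum_insert hyA, add_lt_add_iff_right]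
  refine Finset.card_lt_card ((Finset.ssubset_iff_of_subset ?_).2 ⟨y, ?_, ?_⟩)
  · exact Finset.monotone_filter_right _ fun z _ hz => hz.trans hxy.le
  · exact Finset.mem_filter.2 ⟨hyV, le_rfl⟩
  · exact fun h => (Finset.mem_filter.1 h).2.not_gt hxy

theorem exchange_induction {P : Finset α → Finset α → Prop}
    (separated : ∀ A B, (∀ b ∈ B, ∀ a ∈ A, a ≤ b) → P A B)
    (exchange : ∀ A B x y, x < y → (∀ z ∈ A ∪ B, z ∉ Set.Icc x y) →
      P (insert x A) (insert y B) → P (insert x A) B → P A (insert y B) → P A B →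
        P (insert y A) (insert x B))
    (hAB : Disjoint A B) : P A B := by
  obtain ⟨V, hAV, hBV⟩ : ∃ V, A ⊆ V ∧ B ⊆ V :=
    ⟨A ∪ B, Finset.subset_union_left, Finset.subset_union_right⟩
  induction hr : rankSum V A using Nat.strong_induction_on generalizing A B with
  | h r ih =>
    subst hr
    by_cases h : ∃ b ∈ B, ∃ a ∈ A, b < a
    · obtain ⟨A, B, x, y, hxy, hgap, rfl, rfl⟩ := exists_insert_insert_of_exists_lt hAB h
      have hx : x ∉ A ∪ B := fun h => hgap x h (Set.left_mem_Icc.2 hxy.le)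
      have hy : y ∉ A ∪ B := fun h => hgap y h (Set.right_mem_Icc.2 hxy.le)
      rw [Finset.notMem_union] at hx hy
      rw [Finset.insert_subset_iff] at hAV hBV
      have hlt := rankSum_insert_lt_rankSum_insert hxy hAV.1 hx.1 hy.1
      have hlt' := rankSum_lt_rankSum_insert hAV.1 hy.1
      have hdisj : Disjoint A B := hAB.mono (Finset.subset_insert y A) (Finset.subset_insert x B)
      have hxA := Finset.insert_subset hBV.1 hAV.2
      have hyB := Finset.insert_subset hAV.1 hBV.2
      refine exchange A B x y hxy hgap (ih _ hlt ?_ hxA hyB rfl) (ih _ hlt ?_ hxA hBV.2 rfl)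
        (ih _ hlt' ?_ hAV.2 hyB rfl) (ih _ hlt' hdisj hAV.2 hBV.2 rfl)
      all_goals simp [hdisj, hx, hy, hxy.ne']
    · push Not at h
      exact separated A B h

theorem encard_permsMovingDownUp (hAB : Disjoint A B) :
    (permsMovingDownUp A B).encard = numCompositions IsOverUnderBlock (A, B) := by
  refine exchange_induction (P := fun A B =>
    (permsMovingDownUp A B).encard = numCompositions IsOverUnderBlock (A, B)) ?_ ?_ hAB
  · intro A B h
    rw [encard_permsMovingDownUp_of_forall_le h, numCompositions_of_forall_le h, Nat.cast_ite,
      Nat.cast_one, Nat.cast_zero]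
  · intro A B x y hxy hgap ihxy ihx ihy ih
    rw [encard_permsMovingDownUp_exchange hxy hgap, numCompositions_exchange hxy hgap, ihxy, ihx,
      ihy, ih, Nat.cast_add, Nat.cast_add, Nat.cast_add]

end Perms

theorem count_perms_with_given_over_under_general {α : Type*} [LinearOrder α] {A B : Finset α}
    (hAB : Disjoint A B) :
    Nat.card {σ : Equiv.Perm α //
        (∀ x, σ.symm x < x ↔ x ∈ A) ∧ ∀ x, x < σ.symm x ↔ x ∈ B} =
    Nat.card {L : List (Finset α × Finset α) //
        (∀ p ∈ L, p.1.Nonempty ∧ p.2.Nonempty ∧ ∀ b ∈ p.2, ∀ a ∈ p.1, b < a) ∧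
        (L.map Prod.fst).Pairwise Disjoint ∧
        (L.map Prod.snd).Pairwise Disjoint ∧
        (L.map Prod.fst).foldr (· ∪ ·) ∅ = A ∧
        (L.map Prod.snd).foldr (· ∪ ·) ∅ = B} := by
  simp only [← isBlockComposition_isOverUnderBlock_iff]
  calc _ = Nat.card (permsMovingDownUp A B) :=
        Nat.card_congr ((Equiv.inv (Equiv.Perm α)).subtypeEquiv fun σ => forall_and.symm)
    _ = _ := by
      rw [Nat.card_coe_set_eq, Set.ncard, encard_permsMovingDownUp hAB, ENat.toNat_natCast,
        numCompositions]

/-- Main counting theorem: permutations of `{1,…,n}` with prescribed set `A` of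
over-diagonal values, set `B` of under-diagonal values (and everything else on the
diagonal) are equinumerous with ordered compositions `A = A₁ ∪ … ∪ A_k`,
`B = B₁ ∪ … ∪ B_k` into nonempty parts with `min Aᵢ > max Bᵢ` for all `i`.
A value `x` is over-diagonal for `σ` iff `σ⁻¹ x < x`, and under-diagonal iff
`σ⁻¹ x > x`. -/
theorem count_perms_with_given_over_under (n : ℕ) (A B : Finset (Fin n))
    (hAB : Disjoint A B) :
    Nat.card {σ : Equiv.Perm (Fin n) //
        Finset.univ.filter (fun x => σ.symm x < x) = A ∧
        Finset.univ.filter (fun x => x < σ.symm x) = B} =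
    Nat.card {L : List (Finset (Fin n) × Finset (Fin n)) //
        (∀ p ∈ L, p.1.Nonempty ∧ p.2.Nonempty ∧ ∀ b ∈ p.2, ∀ a ∈ p.1, b < a) ∧
        (L.map Prod.fst).Pairwise Disjoint ∧
        (L.map Prod.snd).Pairwise Disjoint ∧
        (L.map Prod.fst).foldr (· ∪ ·) ∅ = A ∧
        (L.map Prod.snd).foldr (· ∪ ·) ∅ = B} := by
  simpa only [Finset.ext_iff, Finset.mem_filter, Finset.mem_univ, true_and] using
    count_perms_with_given_over_under_general hAB
end

section
/- The Eulerian number E_{k,l} (the number of permutations of {1,...,k+l-1} with k ascents and l descents in the word (0,π(1),...,π(n),0)) equals the shifted multinomial N^{(-1)}_{k,l} = Σ (k+l)!/((k_1+l_1)!···(k_r+l_r)!) · (r-1)!/(r_1!···r_p!), summed over unordered vector partitions (k,l)=(k_1,l_1)+...+(k_r,l_r) with all k_i,l_i ≥ 1 and multiplicities r_1,...,r_p of identical parts. -/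
/-- The fundamental `r`-part multinomial `N^{[r]}_{k,l}`: the number of unordered
partitions of `{1,…,k+l}` into `r` bicolored sets, each carrying a number of reds
`kᵢ ≥ 1` with `lᵢ = |Sᵢ| - kᵢ ≥ 1`, with `Σ kᵢ = k` (hence `Σ lᵢ = l`).  A partition is
recorded as a finset of pairs `(Sᵢ, kᵢ)`. -/
noncomputable def Nfund (k l r : ℕ) : ℕ :=
  Nat.card {P : Finset (Finset (Fin (k + l)) × ℕ) //
    P.card = r ∧
    (∀ p ∈ P, 1 ≤ p.2 ∧ p.2 < p.1.card) ∧
    (P : Set (Finset (Fin (k + l)) × ℕ)).Pairwise (fun p q => Disjoint p.1 q.1) ∧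
    P.sup Prod.fst = Finset.univ ∧
    ∑ p ∈ P, p.2 = k}

/-- The shifted multinomial `N^{(s)}_{k,l} = Σ_{r ≥ max(-s,1)} (r+s)! · N^{[r]}_{k,l}`,
with `(r+s)!` interpreted as `0` when `r + s < 0`.  (All terms with `r > k + l`
vanish.) -/
noncomputable def Nshift (k l : ℕ) (s : ℤ) : ℕ :=
  ∑ r ∈ Finset.Icc 1 (k + l),
    (if 0 ≤ (r : ℤ) + s then ((r : ℤ) + s).toNat.factorial else 0) * Nfund k l r

/-- The bordered word `(0, π(1), …, π(n), 0)` of a permutation `π` of `Fin n`: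
`word π j` is `π(j)` (1-indexed, with values in `{1,…,n}`) for `1 ≤ j ≤ n`, and `0`
otherwise. -/
def word {n : ℕ} (π : Equiv.Perm (Fin n)) (j : ℕ) : ℕ :=
  if h : j - 1 < n ∧ 1 ≤ j then (π ⟨j - 1, h.1⟩).val + 1 else 0

/-- Number of ascents of `π` in the word `(0, π(1), …, π(n), 0)`. -/
def ascCount {n : ℕ} (π : Equiv.Perm (Fin n)) : ℕ :=
  ((Finset.range (n + 1)).filter fun j => word π j < word π (j + 1)).card

/-- Number of descents of `π` in the word `(0, π(1), …, π(n), 0)`. -/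
def descCount {n : ℕ} (π : Equiv.Perm (Fin n)) : ℕ :=
  ((Finset.range (n + 1)).filter fun j => word π (j + 1) < word π j).card

/-! Let `δ` be a derivation with `δ x = δ y = x * y`, and let `Aₙ` be the sum of
`x ^ asc π * y ^ desc π` over the permutations `π` of `n` letters. Inserting `n + 1` into a gap of a
word turns an ascent or a descent into an ascent followed by a descent, so the Leibniz rule gives
`Aₙ₊₁ = δ Aₙ` for `n ≥ 1`.

The exponential generating function `B` of bicolored sets with both colors present satisfies
`(x - y) * (1 - B) = x * exp (y * T) - y * exp (x * T)`. The derivation `D = ∂/∂T - δ` multiplies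
both terms on the right by `-x * y * T` and kills `x - y`, so `D B = x * y * T * (1 - B)` and hence
`D (-log (1 - B)) = x * y * T`. Thus `n! * [Tⁿ] (-log (1 - B))` satisfies the recursion of `Aₙ₋₁`.
By the exponential formula it is also the sum over `r` of `(r - 1)!` times the weighted count of
partitions of an `n`-set into `r` bicolored blocks; compare coefficients of `x ^ k * y ^ l`.

The logarithm is truncated at a degree `N ≥ n - 1` in `B` to stay within finite sums; since `T ∣ B`,
the additional term in `D (-log (1 - B))` has order above `n - 1`. -/

open Finset

section Insertion

/-- Insertion of the new maximum at position `p`: the one-line word of `insertMax p σ` is that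
of `σ` with `n` put between its entries at positions `p - 1` and `p`. -/
def insertMax {n : ℕ} (p : Fin (n + 1)) (σ : Equiv.Perm (Fin n)) : Equiv.Perm (Fin (n + 1)) :=
  (finSuccEquiv' p).trans ((Equiv.optionCongr σ).trans (finSuccEquiv' (Fin.last n)).symm)

variable {n : ℕ}

theorem insertMax_apply_self (p : Fin (n + 1)) (σ : Equiv.Perm (Fin n)) :
    insertMax p σ p = Fin.last n := by
  simp [insertMax]

theorem insertMax_apply_succAbove (p : Fin (n + 1)) (σ : Equiv.Perm (Fin n)) (i : Fin n) :
    insertMax p σ (p.succAbove i) = (σ i).castSucc := by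
  simp [insertMax]

theorem insertMax_bijective (n : ℕ) :
    Function.Bijective fun q : Fin (n + 1) × Equiv.Perm (Fin n) => insertMax q.1 q.2 := by
  rw [Fintype.bijective_iff_injective_and_card]
  refine ⟨?_, by simp [Fintype.card_perm, Nat.factorial_succ]⟩
  rintro ⟨p, σ⟩ ⟨q, τ⟩ (h : insertMax p σ = insertMax q τ)
  obtain rfl : p = q := (insertMax p σ).injective <| by
    rw [insertMax_apply_self, h, insertMax_apply_self]
  have hστ : σ = τ := Equiv.ext fun i => Fin.castSucc_injective n <| by
    rw [← insertMax_apply_succAbove p, h, insertMax_apply_succAbove]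
  rw [hστ]

theorem word_zero (π : Equiv.Perm (Fin n)) : word π 0 = 0 := by
  simp [word]

theorem word_succ (π : Equiv.Perm (Fin n)) (i : Fin n) : word π (i + 1) = π i + 1 := by
  simp [word]

theorem word_of_lt (π : Equiv.Perm (Fin n)) {j : ℕ} (hj : n < j) : word π j = 0 :=
  dif_neg (by omega)

theorem word_le (π : Equiv.Perm (Fin n)) (j : ℕ) : word π j ≤ n := by
  unfold word
  split_ifs
  · exact (π _).isLt
  · exact n.zero_le

theorem word_ne_word_succ (hn : 1 ≤ n) (π : Equiv.Perm (Fin n)) {j : ℕ} (hj : j ≤ n) :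
    word π j ≠ word π (j + 1) := by
  rcases j with _ | j
  · rw [word_zero, word_succ π ⟨0, hn⟩]
    exact (Nat.succ_ne_zero _).symm
  rw [word_succ π ⟨j, hj⟩]
  rcases hj.eq_or_lt with hlast | hlt
  · rw [word_of_lt π (by omega)]
    exact Nat.succ_ne_zero _
  · rw [word_succ π ⟨j + 1, hlt⟩]
    intro h
    have hpos : j = j + 1 :=
      congrArg Fin.val (π.injective (Fin.ext (Nat.succ_injective h)))
    omega

theorem word_insertMax_of_le (p : Fin (n + 1)) (σ : Equiv.Perm (Fin n)) {j : ℕ} (hj : j ≤ p) :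
    word (insertMax p σ) j = word σ j := by
  rcases j with _ | j
  · rw [word_zero, word_zero]
  · have hpos : p.succAbove ⟨j, by omega⟩ = ⟨j, by omega⟩ :=
      Fin.succAbove_of_castSucc_lt _ _ (Fin.lt_def.2 hj)
    rw [word_succ _ ⟨j, by omega⟩, word_succ σ ⟨j, by omega⟩, ← hpos, insertMax_apply_succAbove,
      Fin.val_castSucc]

theorem word_insertMax_self (p : Fin (n + 1)) (σ : Equiv.Perm (Fin n)) :
    word (insertMax p σ) (p + 1) = n + 1 := by
  rw [word_succ, insertMax_apply_self, Fin.val_last]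

theorem word_insertMax_of_lt (p : Fin (n + 1)) (σ : Equiv.Perm (Fin n)) {j : ℕ} (hj : p < j) :
    word (insertMax p σ) (j + 1) = word σ j := by
  by_cases hnj : n < j
  · rw [word_of_lt _ (by omega), word_of_lt _ hnj]
  · obtain ⟨i, rfl⟩ : ∃ i, j = i + 1 := ⟨j - 1, by omega⟩
    have hpos : p.succAbove ⟨i, by omega⟩ = ⟨i + 1, by omega⟩ :=
      Fin.succAbove_of_le_castSucc _ _ (Fin.le_def.2 (Nat.lt_succ_iff.1 hj))
    rw [word_succ _ ⟨i + 1, by omega⟩, word_succ σ ⟨i, by omega⟩, ← hpos,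
      insertMax_apply_succAbove, Fin.val_castSucc]

end Insertion

section EulerianPolynomial

theorem prod_range_succ_of_insert {M : Type*} [CommMonoid M] {f g : ℕ → M} {p N : ℕ} (hp : p < N)
    (hbefore : ∀ j < p, g j = f j) (hafter : ∀ j, p < j → g (j + 1) = f j) :
    ∏ j ∈ range (N + 1), g j = g p * g (p + 1) * ∏ j ∈ (range N).erase p, f j := by
  induction N, Nat.succ_le_of_lt hp using Nat.le_induction with
  | base =>
    rw [prod_range_succ, prod_range_succ, range_add_one, erase_insert notMem_range_self,
      prod_congr rfl fun j hj => hbefore j (mem_range.1 hj), mul_assoc, mul_comm]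
  | succ N hN ih =>
    rw [prod_range_succ, ih hN, hafter N hN, range_add_one, erase_insert_of_ne (by omega),
      prod_insert (by simp), mul_assoc, mul_comm (∏ _ ∈ _, _)]

theorem derivation_prod {k A M ι : Type*} [CommSemiring k] [CommSemiring A] [AddCommMonoid M]
    [Algebra k A] [Module A M] [Module k M] [DecidableEq ι] (D : Derivation k A M) (s : Finset ι)
    (f : ι → A) : D (∏ i ∈ s, f i) = ∑ i ∈ s, (∏ j ∈ s.erase i, f j) • D (f i) := by
  induction s using Finset.induction_on with
  | empty => simp
  | insert a s ha ih =>
    have herase : ∀ i ∈ s, ∏ j ∈ (insert a s).erase i, f j = f a * ∏ j ∈ s.erase i, f j := by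
      intro i hi
      rw [erase_insert_of_ne (ne_of_mem_of_not_mem hi ha).symm,
        prod_insert fun h => ha (mem_of_mem_erase h)]
    rw [prod_insert ha, D.leibniz, ih, sum_insert ha, erase_insert ha, smul_sum, add_comm]
    congr 1
    refine sum_congr rfl fun i hi => ?_
    rw [herase i hi, mul_smul]

variable {R : Type*} [CommSemiring R]

/-- The weight of two consecutive letters of a word: `x` for an ascent, `y` for a descent and `1`
for a repetition. -/
def stepWeight (x y : R) (a b : ℕ) : R :=
  if a < b then x else if b < a then y else 1

/-- The homogeneous Eulerian polynomial evaluated at `x` and `y`: the exponents of `x` and `y`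
count the ascents and the descents of the zero-bordered word. -/
def eulerianPoly (x y : R) (n : ℕ) : R :=
  ∑ π : Equiv.Perm (Fin n), x ^ ascCount π * y ^ descCount π

theorem prod_stepWeight_word (x y : R) {n : ℕ} (π : Equiv.Perm (Fin n)) :
    ∏ j ∈ range (n + 1), stepWeight x y (word π j) (word π (j + 1)) =
      x ^ ascCount π * y ^ descCount π := by
  have hsplit (a b : ℕ) :
      stepWeight x y a b = (if a < b then x else 1) * if b < a then y else 1 := by
    unfold stepWeight
    split_ifs <;> first | omega | simp
  simp only [hsplit, prod_mul_distrib, prod_ite, prod_const, one_pow, mul_one, ascCount, descCount]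

theorem pow_ascCount_mul_pow_descCount_insertMax (x y : R) {n : ℕ} (p : Fin (n + 1))
    (σ : Equiv.Perm (Fin n)) :
    x ^ ascCount (insertMax p σ) * y ^ descCount (insertMax p σ) =
      x * y * ∏ j ∈ (range (n + 1)).erase p, stepWeight x y (word σ j) (word σ (j + 1)) := by
  have hascent : stepWeight x y (word (insertMax p σ) p) (word (insertMax p σ) (p + 1)) = x := by
    rw [word_insertMax_of_le p σ le_rfl, word_insertMax_self]
    exact if_pos (Nat.lt_succ_of_le (word_le σ p))
  have hdescent :
      stepWeight x y (word (insertMax p σ) (p + 1)) (word (insertMax p σ) (p + 1 + 1)) = y := by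
    rw [word_insertMax_self, word_insertMax_of_lt p σ (lt_add_one _)]
    have hle := word_le σ (p + 1)
    rw [stepWeight, if_neg (by omega), if_pos (by omega)]
  rw [← prod_stepWeight_word, prod_range_succ_of_insert (f := fun j =>
    stepWeight x y (word σ j) (word σ (j + 1))) p.isLt, hascent, hdescent]
  · intro j hj
    rw [word_insertMax_of_le p σ hj.le, word_insertMax_of_le p σ hj]
  · intro j hj
    rw [word_insertMax_of_lt p σ hj, word_insertMax_of_lt p σ (by omega)]

theorem eulerianPoly_one (x y : R) : eulerianPoly x y 1 = x * y := by
  have hasc : ascCount (1 : Equiv.Perm (Fin 1)) = 1 := by decide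
  have hdesc : descCount (1 : Equiv.Perm (Fin 1)) = 1 := by decide
  rw [eulerianPoly, Fintype.sum_unique, Subsingleton.elim default 1, hasc, hdesc, pow_one, pow_one]

variable {k : Type*} [CommSemiring k] [Algebra k R] {x y : R} {δ : Derivation k R R}

theorem derivation_stepWeight (hx : δ x = x * y) (hy : δ y = x * y) {a b : ℕ} (hab : a ≠ b) :
    δ (stepWeight x y a b) = x * y := by
  unfold stepWeight
  split_ifs
  · exact hx
  · exact hy
  · omega

theorem eulerianPoly_succ (hx : δ x = x * y) (hy : δ y = x * y) {n : ℕ} (hn : 1 ≤ n) :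
    eulerianPoly x y (n + 1) = δ (eulerianPoly x y n) := by
  rw [eulerianPoly, ← (insertMax_bijective n).sum_comp fun π => x ^ ascCount π * y ^ descCount π,
    Fintype.sum_prod_type_right, eulerianPoly, map_sum]
  refine sum_congr rfl fun σ _ => ?_
  rw [← prod_stepWeight_word, derivation_prod, ← Fin.sum_univ_eq_sum_range fun i =>
    (∏ j ∈ (range (n + 1)).erase i, stepWeight x y (word σ j) (word σ (j + 1))) •
      δ (stepWeight x y (word σ i) (word σ (i + 1)))]
  refine sum_congr rfl fun p _ => ?_
  rw [pow_ascCount_mul_pow_descCount_insertMax, smul_eq_mul, mul_comm,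
    derivation_stepWeight hx hy (word_ne_word_succ hn σ p.is_le)]

end EulerianPolynomial

section DecoratedPartition

variable {α ι : Type*} [DecidableEq α] [DecidableEq ι]

/-- The decorated subsets of `S`: pairs of a subset and a decoration, where the decorations
allowed on a subset of size `m` are those in `β m`. -/
def decoratedSubsets (β : ℕ → Finset ι) (S : Finset α) : Finset (Finset α × ι) :=
  S.powerset.biUnion fun T => {T} ×ˢ β T.card

open Classical in
/-- The partitions of `S` into `r` decorated blocks, each recorded as the finset of its blocks. -/
noncomputable def decoratedPartitions (β : ℕ → Finset ι) (S : Finset α) (r : ℕ) :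
    Finset (Finset (Finset α × ι)) :=
  {P ∈ (decoratedSubsets β S).powersetCard r |
    (P : Set (Finset α × ι)).PairwiseDisjoint Prod.fst ∧ P.sup Prod.fst = S}

variable {β : ℕ → Finset ι} {S : Finset α} {r : ℕ}

theorem mem_decoratedSubsets {p : Finset α × ι} :
    p ∈ decoratedSubsets β S ↔ p.1 ⊆ S ∧ p.2 ∈ β p.1.card := by
  simp only [decoratedSubsets, mem_biUnion, mem_powerset, mem_product, mem_singleton]
  constructor
  · rintro ⟨T, hTS, rfl, hp⟩
    exact ⟨hTS, hp⟩
  · rintro ⟨hpS, hp⟩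
    exact ⟨p.1, hpS, rfl, hp⟩

theorem mem_decoratedPartitions {P : Finset (Finset α × ι)} :
    P ∈ decoratedPartitions β S r ↔ P.card = r ∧ (∀ p ∈ P, p.2 ∈ β p.1.card) ∧
      (P : Set (Finset α × ι)).PairwiseDisjoint Prod.fst ∧ P.sup Prod.fst = S := by
  simp only [decoratedPartitions, mem_filter, mem_powersetCard, subset_iff, mem_decoratedSubsets]
  constructor
  · rintro ⟨⟨hblocks, hcard⟩, hdisj, hsup⟩
    exact ⟨hcard, fun p hp => (hblocks hp).2, hdisj, hsup⟩
  · rintro ⟨hcard, hdec, hdisj, rfl⟩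
    exact ⟨⟨fun p hp => ⟨le_sup (f := Prod.fst) hp, hdec p hp⟩, hcard⟩, hdisj, rfl⟩

theorem sum_card_fst_of_mem_decoratedPartitions {P : Finset (Finset α × ι)}
    (hP : P ∈ decoratedPartitions β S r) : ∑ p ∈ P, p.1.card = S.card := by
  obtain ⟨-, -, hdisj, rfl⟩ := mem_decoratedPartitions.1 hP
  rw [sup_eq_biUnion, card_biUnion hdisj]

theorem mem_decoratedSubsets_of_mem {P : Finset (Finset α × ι)} {p : Finset α × ι}
    (hP : P ∈ decoratedPartitions β S r) (hp : p ∈ P) : p ∈ decoratedSubsets β S := by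
  obtain ⟨-, hdec, -, rfl⟩ := mem_decoratedPartitions.1 hP
  exact mem_decoratedSubsets.2 ⟨le_sup (f := Prod.fst) hp, hdec p hp⟩

theorem erase_mem_decoratedPartitions {P : Finset (Finset α × ι)} {p : Finset α × ι}
    (hP : P ∈ decoratedPartitions β S (r + 1)) (hp : p ∈ P) :
    P.erase p ∈ decoratedPartitions β (S \ p.1) r := by
  obtain ⟨hcard, hdec, hdisj, rfl⟩ := mem_decoratedPartitions.1 hP
  refine mem_decoratedPartitions.2 ⟨by rw [card_erase_of_mem hp, hcard, Nat.add_sub_cancel],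
    fun q hq => hdec q (mem_of_mem_erase hq), hdisj.subset (coe_subset.2 (erase_subset p P)), ?_⟩
  have hdisj_sup : Disjoint p.1 ((P.erase p).sup Prod.fst) :=
    Finset.disjoint_sup_right.2 fun q hq =>
      hdisj hp (mem_of_mem_erase hq) (ne_of_mem_erase hq).symm
  rw [← insert_erase hp, sup_insert, erase_insert (notMem_erase p P), sup_eq_union,
    union_sdiff_cancel_left hdisj_sup]

theorem disjoint_fst_of_mem_decoratedPartitions_sdiff {Q : Finset (Finset α × ι)} {T : Finset α}
    (hQ : Q ∈ decoratedPartitions β (S \ T) r) {q : Finset α × ι} (hq : q ∈ Q) :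
    Disjoint T q.1 :=
  disjoint_sdiff.mono_right
    (mem_decoratedSubsets.1 (mem_decoratedSubsets_of_mem hQ hq)).1

theorem notMem_of_mem_decoratedPartitions_sdiff (hβ : β 0 = ∅) {Q : Finset (Finset α × ι)}
    {p : Finset α × ι} (hp : p ∈ decoratedSubsets β S)
    (hQ : Q ∈ decoratedPartitions β (S \ p.1) r) : p ∉ Q := by
  intro hpQ
  have hempty : p.1 = ∅ := disjoint_self.1 (disjoint_fst_of_mem_decoratedPartitions_sdiff hQ hpQ)
  have hdec := (mem_decoratedSubsets.1 hp).2
  rw [hempty, card_empty, hβ] at hdec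
  exact notMem_empty _ hdec

theorem insert_mem_decoratedPartitions (hβ : β 0 = ∅) {Q : Finset (Finset α × ι)}
    {p : Finset α × ι} (hp : p ∈ decoratedSubsets β S)
    (hQ : Q ∈ decoratedPartitions β (S \ p.1) r) :
    insert p Q ∈ decoratedPartitions β S (r + 1) := by
  have hpQ := notMem_of_mem_decoratedPartitions_sdiff hβ hp hQ
  obtain ⟨hpS, hpdec⟩ := mem_decoratedSubsets.1 hp
  obtain ⟨hcard, hdec, hdisj, hsup⟩ := mem_decoratedPartitions.1 hQ
  refine mem_decoratedPartitions.2 ⟨by rw [card_insert_of_notMem hpQ, hcard],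
    forall_mem_insert _ _ _ |>.2 ⟨hpdec, hdec⟩, ?_, ?_⟩
  · rw [coe_insert]
    exact hdisj.insert fun q hq _ => disjoint_fst_of_mem_decoratedPartitions_sdiff hQ hq
  · rw [sup_insert, hsup, sup_eq_union, union_sdiff_of_subset hpS]

variable {R : Type*} [CommSemiring R]

/-- The total weight of the partitions of `S` into `r` decorated blocks, a block of size `m` with
decoration `i` contributing a factor `v m i`. -/
noncomputable def partitionSum (β : ℕ → Finset ι) (v : ℕ → ι → R) (S : Finset α) (r : ℕ) : R :=
  ∑ P ∈ decoratedPartitions β S r, ∏ p ∈ P, v p.1.card p.2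

variable {v : ℕ → ι → R}

theorem partitionSum_zero (β : ℕ → Finset ι) (v : ℕ → ι → R) (S : Finset α) :
    partitionSum β v S 0 = if S.card = 0 then 1 else 0 := by
  rw [partitionSum]
  split_ifs with hS
  · obtain rfl := card_eq_zero.1 hS
    have hsingle : decoratedPartitions β (∅ : Finset α) 0 = {∅} := by
      ext P
      rw [mem_decoratedPartitions, mem_singleton, card_eq_zero, and_iff_left_iff_imp]
      rintro rfl
      simp
    rw [hsingle, sum_singleton, prod_empty]
  · refine sum_eq_zero fun P hP => absurd ?_ hS
    obtain rfl := card_eq_zero.1 (mem_decoratedPartitions.1 hP).1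
    rw [← sum_card_fst_of_mem_decoratedPartitions hP, sum_empty]

theorem sum_decoratedSubsets_mul (f : Finset α → R) :
    ∑ p ∈ decoratedSubsets β S, v p.1.card p.2 * f p.1 =
      ∑ T ∈ S.powerset, (∑ i ∈ β T.card, v T.card i) * f T := by
  rw [sum_finset_product _ S.powerset fun T => β T.card]
  · simp only [sum_mul]
  · intro p
    rw [mem_decoratedSubsets, mem_powerset]

-- Both sides count the partitions with one distinguished block.
theorem succ_mul_partitionSum_succ (hβ : β 0 = ∅) :
    ((r + 1 : ℕ) : R) * partitionSum β v S (r + 1) =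
      ∑ T ∈ S.powerset, (∑ i ∈ β T.card, v T.card i) * partitionSum β v (S \ T) r := by
  calc ((r + 1 : ℕ) : R) * partitionSum β v S (r + 1)
      = ∑ P ∈ decoratedPartitions β S (r + 1), ∑ _p ∈ P, ∏ q ∈ P, v q.1.card q.2 := by
        rw [partitionSum, mul_sum]
        refine sum_congr rfl fun P hP => ?_
        rw [sum_const, (mem_decoratedPartitions.1 hP).1, nsmul_eq_mul]
    _ = ∑ p ∈ decoratedSubsets β S, ∑ Q ∈ decoratedPartitions β (S \ p.1) r,
          v p.1.card p.2 * ∏ q ∈ Q, v q.1.card q.2 := by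
        rw [sum_sigma', sum_sigma']
        refine sum_bij' (fun x _ => ⟨x.2, x.1.erase x.2⟩) (fun x _ => ⟨insert x.1 x.2, x.1⟩)
          ?_ ?_ ?_ ?_ ?_ <;> rintro ⟨P, p⟩ h <;> rw [mem_sigma] at h
        · exact mem_sigma.2
            ⟨mem_decoratedSubsets_of_mem h.1 h.2, erase_mem_decoratedPartitions h.1 h.2⟩
        · exact mem_sigma.2 ⟨insert_mem_decoratedPartitions hβ h.1 h.2, mem_insert_self _ _⟩
        · simp only [insert_erase h.2]
        · simp only [erase_insert (notMem_of_mem_decoratedPartitions_sdiff hβ h.1 h.2)]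
        · exact (mul_prod_erase P _ h.2).symm
    _ = ∑ p ∈ decoratedSubsets β S, v p.1.card p.2 * partitionSum β v (S \ p.1) r := by
        simp only [partitionSum, mul_sum]
    _ = _ := sum_decoratedSubsets_mul fun T => partitionSum β v (S \ T) r

open PowerSeries in
theorem sum_powerset_factorial_mul_coeff (f g : R⟦X⟧) (S : Finset α) :
    ∑ T ∈ S.powerset,
        (T.card.factorial * coeff T.card f) * ((S \ T).card.factorial * coeff (S \ T).card g) =
      S.card.factorial * coeff S.card (f * g) := by
  calc _ = ∑ T ∈ S.powerset, (T.card.factorial * coeff T.card f) *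
          ((S.card - T.card).factorial * coeff (S.card - T.card) g) :=
        sum_congr rfl fun T hT => by rw [card_sdiff_of_subset (mem_powerset.1 hT)]
    _ = ∑ m ∈ range (S.card + 1), S.card.choose m • ((m.factorial * coeff m f) *
          ((S.card - m).factorial * coeff (S.card - m) g)) :=
        sum_powerset_apply_card fun m =>
          (m.factorial * coeff m f) * ((S.card - m).factorial * coeff (S.card - m) g)
    _ = S.card.factorial * coeff S.card (f * g) := by
        rw [coeff_mul, Nat.sum_antidiagonal_eq_sum_range_succ_mk, mul_sum]
        refine sum_congr rfl fun m hm => ?_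
        rw [← Nat.choose_mul_factorial_mul_factorial (mem_range_succ_iff.1 hm)]
        push_cast
        rw [nsmul_eq_mul]
        ring

-- The exponential formula, one number of blocks at a time.
open PowerSeries in
theorem factorial_mul_partitionSum (hβ : β 0 = ∅) {W : R⟦X⟧}
    (hW : ∀ m : ℕ, m.factorial * coeff m W = ∑ i ∈ β m, v m i) (r : ℕ) (S : Finset α) :
    r.factorial * partitionSum β v S r = S.card.factorial * coeff S.card (W ^ r) := by
  induction r generalizing S with
  | zero =>
    rw [partitionSum_zero, pow_zero, coeff_one]
    split_ifs with hS <;> simp [hS]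
  | succ r ih =>
    calc ((r + 1).factorial : R) * partitionSum β v S (r + 1)
        = r.factorial * (((r + 1 : ℕ) : R) * partitionSum β v S (r + 1)) := by
          rw [Nat.factorial_succ, Nat.cast_mul]
          ring
      _ = ∑ T ∈ S.powerset, (T.card.factorial * coeff T.card W) *
            ((S \ T).card.factorial * coeff (S \ T).card (W ^ r)) := by
          rw [succ_mul_partitionSum_succ hβ, mul_sum]
          refine sum_congr rfl fun T _ => ?_
          rw [← ih, hW, mul_left_comm]
      _ = S.card.factorial * coeff S.card (W ^ (r + 1)) := by
          rw [sum_powerset_factorial_mul_coeff, pow_succ']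

end DecoratedPartition

section Flow

open PowerSeries

variable {k R : Type*} [CommRing k] [CommRing R] [Algebra k R]

/-- The extension of a derivation of `R` to `R⟦X⟧` that acts on each coefficient. -/
noncomputable def coeffwiseDerivation (δ : Derivation k R R) : Derivation k R⟦X⟧ R⟦X⟧ :=
  Derivation.mk'
    { toFun := fun f => PowerSeries.mk fun n => δ (coeff n f)
      map_add' := fun f g => by ext n; simp
      map_smul' := fun c f => by ext n; simp } fun f g => by
    ext n
    simp only [LinearMap.coe_mk, AddHom.coe_mk, smul_eq_mul, map_add, coeff_mk, coeff_mul, map_sum,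
      δ.leibniz, sum_add_distrib]
    rw [← Nat.sum_antidiagonal_swap (n := n) (f := fun p => coeff p.1 g * _)]
    rfl

theorem coeff_coeffwiseDerivation (δ : Derivation k R R) (f : R⟦X⟧) (n : ℕ) :
    coeff n (coeffwiseDerivation δ f) = δ (coeff n f) :=
  coeff_mk n fun m => δ (coeff m f)

/-- The derivation `∂/∂X - δ` of `R⟦X⟧`, whose kernel consists of the formal solutions `f` of the
flow equation `∂f/∂X = δ f`. -/
noncomputable def flowDerivation (δ : Derivation k R R) : Derivation k R⟦X⟧ R⟦X⟧ :=
  (derivative R).restrictScalars k - coeffwiseDerivation δ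

theorem coeff_flowDerivation (δ : Derivation k R R) (f : R⟦X⟧) (n : ℕ) :
    coeff n (flowDerivation δ f) = coeff (n + 1) f * (n + 1) - δ (coeff n f) := by
  rw [flowDerivation, Derivation.sub_apply, map_sub, Derivation.restrictScalars_apply,
    coeff_derivative, coeff_coeffwiseDerivation]

theorem flowDerivation_C (δ : Derivation k R R) (a : R) : flowDerivation δ (C a) = -C (δ a) := by
  ext n
  rw [coeff_flowDerivation, coeff_C, coeff_C, map_neg, coeff_C]
  split_ifs <;> simp_all

theorem flowDerivation_rescale_exp [Algebra ℚ R] (δ : Derivation ℚ R R) (a : R) :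
    flowDerivation δ (rescale a (exp R)) = (C a - C (δ a) * X) * rescale a (exp R) := by
  ext n
  rw [coeff_flowDerivation, sub_mul, mul_assoc, map_sub, coeff_C_mul, coeff_C_mul]
  simp only [coeff_rescale, coeff_exp, δ.leibniz, δ.map_algebraMap, δ.leibniz_pow]
  rcases n with _ | n
  · simp
  · have hfact (m : ℕ) : algebraMap ℚ R (1 / (m + 1).factorial) * (m + 1) =
        algebraMap ℚ R (1 / m.factorial) := by
      rw [← Nat.cast_succ, ← map_natCast (algebraMap ℚ R), ← map_mul, Nat.factorial_succ]
      congr 1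
      push_cast
      field_simp
    rw [coeff_succ_X_mul, coeff_rescale, coeff_exp, mul_assoc, hfact, ← hfact n]
    simp only [smul_eq_mul, nsmul_eq_mul, Nat.add_sub_cancel]
    push_cast
    ring

theorem flowDerivation_C_mul_rescale_exp [Algebra ℚ R] {δ : Derivation ℚ R R} {a b : R}
    (ha : δ a = a * b) : flowDerivation δ (C a * rescale b (exp R)) =
      -(C (δ b) * X) * (C a * rescale b (exp R)) := by
  rw [Derivation.leibniz, flowDerivation_C, flowDerivation_rescale_exp, ha, map_mul, smul_eq_mul,
    smul_eq_mul]
  ring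

end Flow

section TruncatedLogarithm

variable {A : Type*} [CommRing A] [Algebra ℚ A]

/-- The truncation of `-log (1 - b)` after the term of degree `N` in `b`. -/
def truncNegLog (N : ℕ) (b : A) : A :=
  ∑ r ∈ range N, (r + 1 : ℚ)⁻¹ • b ^ (r + 1)

theorem derivation_truncNegLog (D : Derivation ℚ A A) (N : ℕ) (b : A) :
    D (truncNegLog N b) = (∑ r ∈ range N, b ^ r) * D b := by
  rw [truncNegLog, map_sum, sum_mul]
  refine sum_congr rfl fun r _ => ?_
  have hr : (r + 1 : ℚ) ≠ 0 := by positivity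
  rw [D.map_smul, D.leibniz_pow, Nat.add_sub_cancel, ← Nat.cast_smul_eq_nsmul ℚ, Nat.cast_succ,
    inv_smul_smul₀ hr, smul_eq_mul]

theorem derivation_truncNegLog_of_eq_mul_one_sub {D : Derivation ℚ A A} {b c : A}
    (hb : D b = c * (1 - b)) (N : ℕ) : D (truncNegLog N b) = c * (1 - b ^ N) := by
  rw [derivation_truncNegLog, hb, mul_left_comm, geom_sum_mul_neg]

open PowerSeries

variable {R : Type*} [CommRing R] [Algebra ℚ R]

theorem X_dvd_truncNegLog (N : ℕ) {W : R⟦X⟧} (hW : X ∣ W) : X ∣ truncNegLog N W :=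
  dvd_sum fun r _ => dvd_smul_of_dvd _ (dvd_pow hW r.succ_ne_zero)

theorem factorial_mul_coeff_truncNegLog {α ι : Type*} [DecidableEq α] [DecidableEq ι]
    {β : ℕ → Finset ι} {v : ℕ → ι → R} {W : R⟦X⟧} (hβ : β 0 = ∅)
    (hW : ∀ m : ℕ, m.factorial * coeff m W = ∑ i ∈ β m, v m i) (N : ℕ) (S : Finset α) :
    S.card.factorial * coeff S.card (truncNegLog N W) =
      ∑ r ∈ range N, r.factorial * partitionSum β v S (r + 1) := by
  rw [truncNegLog, map_sum, mul_sum]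
  refine sum_congr rfl fun r _ => ?_
  have hr : (r + 1 : ℚ) ≠ 0 := by positivity
  rw [map_rat_smul, mul_smul_comm, ← factorial_mul_partitionSum hβ hW, Nat.factorial_succ,
    Nat.cast_mul, mul_assoc, ← nsmul_eq_mul, ← Nat.cast_smul_eq_nsmul ℚ, Nat.cast_succ,
    inv_smul_smul₀ hr]

end TruncatedLogarithm

section BicoloredSets

open PowerSeries

variable {R : Type*} [CommRing R] [Algebra ℚ R]

/-- The exponential generating function of bicolored sets with both colors present, a set with
`i` elements of the first color and `j` of the second being weighted by `x ^ i * y ^ j`. -/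
noncomputable def bicoloredEGF (x y : R) : R⟦X⟧ :=
  PowerSeries.mk fun n => algebraMap ℚ R (1 / n.factorial) * ∑ i ∈ Ico 1 n, x ^ i * y ^ (n - i)

theorem factorial_mul_coeff_bicoloredEGF (x y : R) (n : ℕ) :
    n.factorial * coeff n (bicoloredEGF x y) = ∑ i ∈ Ico 1 n, x ^ i * y ^ (n - i) := by
  rw [bicoloredEGF, coeff_mk, ← mul_assoc, ← map_natCast (algebraMap ℚ R), ← map_mul,
    mul_one_div_cancel (Nat.cast_ne_zero.2 n.factorial_ne_zero), map_one, one_mul]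

theorem sub_mul_sum_Ico_one {R : Type*} [CommRing R] (x y : R) {n : ℕ} (hn : 1 ≤ n) :
    (x - y) * ∑ i ∈ Ico 1 n, x ^ i * y ^ (n - i) = y * x ^ n - x * y ^ n := by
  obtain ⟨m, rfl⟩ := Nat.exists_eq_add_of_le' hn
  have hshift : ∑ i ∈ Ico 1 (m + 1), x ^ i * y ^ (m + 1 - i) =
      (∑ i ∈ Ico 1 (m + 1), x ^ i * y ^ (m + 1 - 1 - i)) * y := by
    rw [sum_mul]
    refine sum_congr rfl fun i hi => ?_
    rw [Nat.add_sub_cancel, Nat.succ_sub (Nat.le_of_lt_succ (mem_Ico.1 hi).2), pow_succ, mul_assoc]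
  rw [hshift, ← mul_assoc, (Commute.all x y).mul_geom_sum₂_Ico hn,
    Nat.add_sub_cancel]
  ring

theorem X_dvd_bicoloredEGF (x y : R) : X ∣ bicoloredEGF x y := by
  simp [X_dvd_iff, ← coeff_zero_eq_constantCoeff_apply, bicoloredEGF]

theorem sub_mul_one_sub_bicoloredEGF (x y : R) :
    C (x - y) * (1 - bicoloredEGF x y) =
      C x * rescale y (exp R) - C y * rescale x (exp R) := by
  ext n
  rw [coeff_C_mul, map_sub, mul_sub, bicoloredEGF, coeff_mk, mul_left_comm]
  simp only [map_sub, coeff_C_mul, coeff_rescale, coeff_exp, coeff_one]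
  rcases n.eq_zero_or_pos with rfl | hn
  · simp
  · rw [sub_mul_sum_Ico_one x y hn, if_neg hn.ne']
    ring

variable {x y : R} {δ : Derivation ℚ R R}

theorem flowDerivation_bicoloredEGF [IsDomain R] (hx : δ x = x * y) (hy : δ y = x * y)
    (hxy : x ≠ y) :
    flowDerivation δ (bicoloredEGF x y) = C (x * y) * X * (1 - bicoloredEGF x y) := by
  have hne : C (x - y) ≠ (0 : R⟦X⟧) := by
    rwa [Ne, map_eq_zero_iff _ C_injective, sub_eq_zero]
  have hconst : flowDerivation δ (C (x - y)) = 0 := by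
    rw [flowDerivation_C, map_sub, hx, hy, sub_self, map_zero, neg_zero]
  have hflow : C (x - y) * flowDerivation δ (1 - bicoloredEGF x y) =
      C (x - y) * -(C (x * y) * X * (1 - bicoloredEGF x y)) := by
    calc C (x - y) * flowDerivation δ (1 - bicoloredEGF x y)
        = flowDerivation δ (C (x - y) * (1 - bicoloredEGF x y)) := by
          rw [Derivation.leibniz, hconst, smul_zero, add_zero, smul_eq_mul]
      _ = -(C (x * y) * X) * (C (x - y) * (1 - bicoloredEGF x y)) := by
          rw [sub_mul_one_sub_bicoloredEGF, map_sub, flowDerivation_C_mul_rescale_exp hx,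
            flowDerivation_C_mul_rescale_exp (hy.trans (mul_comm x y)), hx, hy, mul_sub]
      _ = C (x - y) * -(C (x * y) * X * (1 - bicoloredEGF x y)) := by ring
  rw [← neg_inj, ← mul_left_cancel₀ hne hflow, map_sub, Derivation.map_one_eq_zero, zero_sub]

theorem coeff_succ_truncNegLog_bicoloredEGF [IsDomain R] (hx : δ x = x * y) (hy : δ y = x * y)
    (hxy : x ≠ y) {n N : ℕ} (hn : n ≤ N) :
    coeff (n + 1) (truncNegLog N (bicoloredEGF x y)) * (n + 1) =
      δ (coeff n (truncNegLog N (bicoloredEGF x y))) + if n = 1 then x * y else 0 := by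
  have hvanish : coeff n (C (x * y) * X * bicoloredEGF x y ^ N) = 0 := by
    refine X_pow_dvd_iff.1 ?_ n (Nat.lt_succ_of_le hn)
    rw [pow_succ', mul_assoc (C _)]
    exact (mul_dvd_mul_left X (pow_dvd_pow_of_dvd (X_dvd_bicoloredEGF x y) N)).mul_left _
  rw [← sub_eq_iff_eq_add', ← coeff_flowDerivation, derivation_truncNegLog_of_eq_mul_one_sub
    (flowDerivation_bicoloredEGF hx hy hxy), mul_sub, mul_one, map_sub, hvanish, sub_zero,
    coeff_C_mul, coeff_X, mul_ite, mul_one, mul_zero]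

theorem eulerianPoly_eq_factorial_mul_coeff [IsDomain R] (hx : δ x = x * y) (hy : δ y = x * y)
    (hxy : x ≠ y) {n N : ℕ} (hn : 1 ≤ n) (hN : n ≤ N) :
    eulerianPoly x y n =
      (n + 1).factorial * coeff (n + 1) (truncNegLog N (bicoloredEGF x y)) := by
  induction n, hn using Nat.le_induction with
  | base =>
    have hone : coeff 1 (truncNegLog N (bicoloredEGF x y)) = 0 := by
      have hstep := coeff_succ_truncNegLog_bicoloredEGF hx hy hxy N.zero_le
      rw [coeff_zero_eq_constantCoeff_apply,
        X_dvd_iff.1 (X_dvd_truncNegLog N (X_dvd_bicoloredEGF x y))] at hstep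
      simpa using hstep
    have hstep := coeff_succ_truncNegLog_bicoloredEGF hx hy hxy hN
    rw [hone, map_zero, zero_add, if_pos rfl] at hstep
    rw [eulerianPoly_one, ← hstep, mul_comm]
    norm_num [Nat.factorial]
  | succ n hn ih =>
    have hstep := coeff_succ_truncNegLog_bicoloredEGF hx hy hxy hN
    rw [if_neg (by omega), add_zero] at hstep
    rw [eulerianPoly_succ hx hy hn, ih (by omega), ← map_natCast (algebraMap ℚ R),
      ← Algebra.smul_def, δ.map_smul, ← hstep, Algebra.smul_def, map_natCast,
      Nat.factorial_succ (n + 1)]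
    push_cast
    ring

theorem eulerianPoly_eq_sum_partitionSum [IsDomain R] (hx : δ x = x * y) (hy : δ y = x * y)
    (hxy : x ≠ y) {α : Type*} [DecidableEq α] {S : Finset α} {n : ℕ} (hn : 1 ≤ n)
    (hS : S.card = n + 1) {N : ℕ} (hN : n ≤ N) :
    eulerianPoly x y n = ∑ r ∈ range N,
      r.factorial * partitionSum (Ico 1) (fun m i => x ^ i * y ^ (m - i)) S (r + 1) := by
  rw [eulerianPoly_eq_factorial_mul_coeff hx hy hxy hn hN, ← hS,
    factorial_mul_coeff_truncNegLog (Ico_eq_empty (by simp)) (factorial_mul_coeff_bicoloredEGF x y)]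

end BicoloredSets

section BicoloredPartitionCount

theorem card_filter_decoratedPartitions_univ (k l r : ℕ) :
    #{P ∈ decoratedPartitions (Ico 1) (univ : Finset (Fin (k + l))) r | ∑ p ∈ P, p.2 = k} =
      Nfund k l r := by
  refine (Nat.subtype_card _ fun P => ?_).symm
  simp only [mem_filter, mem_decoratedPartitions, mem_Ico, and_assoc]
  rfl

theorem Nshift_neg_one (k l : ℕ) :
    Nshift k l (-1) = ∑ r ∈ range (k + l), r.factorial * Nfund k l (r + 1) := by
  rw [Nshift, ← Ico_add_one_right_eq_Icc, sum_Ico_eq_sum_range, Nat.add_sub_cancel]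
  refine sum_congr rfl fun r _ => ?_
  have hshift : ((1 + r : ℕ) : ℤ) + -1 = r := by omega
  rw [hshift, if_pos r.cast_nonneg, Int.toNat_natCast, add_comm 1 r]

end BicoloredPartitionCount

section CoefficientExtraction

open MvPolynomial

theorem coeff_X_zero_pow_mul_X_one_pow {R : Type*} [CommSemiring R] (a b k l : ℕ) :
    coeff (Finsupp.single 0 k + Finsupp.single 1 l)
        ((X 0 : MvPolynomial (Fin 2) R) ^ a * X 1 ^ b) = if a = k ∧ b = l then 1 else 0 := by
  have hexp : Finsupp.single (0 : Fin 2) a + Finsupp.single 1 b =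
      Finsupp.single 0 k + Finsupp.single 1 l ↔ a = k ∧ b = l := by
    simp [Finsupp.ext_iff, Fin.forall_fin_two]
  rw [X_pow_eq_monomial, X_pow_eq_monomial, monomial_mul, mul_one, coeff_monomial]
  simp only [hexp]

theorem coeff_eulerianPoly {R : Type*} [CommSemiring R] (k l n : ℕ) :
    coeff (Finsupp.single 0 k + Finsupp.single 1 l)
        (eulerianPoly (X 0 : MvPolynomial (Fin 2) R) (X 1) n) =
      Nat.card {π : Equiv.Perm (Fin n) // ascCount π = k ∧ descCount π = l} := by
  rw [eulerianPoly, coeff_sum, Nat.card_eq_fintype_card, Fintype.card_subtype, card_filter]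
  push_cast
  exact sum_congr rfl fun π _ => coeff_X_zero_pow_mul_X_one_pow _ _ _ _

theorem coeff_partitionSum_univ {R : Type*} [CommSemiring R] (k l r : ℕ) :
    coeff (Finsupp.single 0 k + Finsupp.single 1 l)
        (partitionSum (Ico 1) (fun m i => (X 0 ^ i * X 1 ^ (m - i) : MvPolynomial (Fin 2) R))
          (univ : Finset (Fin (k + l))) r) = Nfund k l r := by
  have hmonomial : ∀ P ∈ decoratedPartitions (Ico 1) (univ : Finset (Fin (k + l))) r,
      coeff (Finsupp.single 0 k + Finsupp.single 1 l)
        (∏ p ∈ P, (X 0 : MvPolynomial (Fin 2) R) ^ p.2 * X 1 ^ (p.1.card - p.2)) =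
      if ∑ p ∈ P, p.2 = k then 1 else 0 := by
    intro P hP
    have hsize : ∑ p ∈ P, (p.1.card - p.2) + ∑ p ∈ P, p.2 = k + l := by
      rw [← sum_add_distrib]
      refine Eq.trans ?_ ((sum_card_fst_of_mem_decoratedPartitions hP).trans (card_fin (k + l)))
      exact sum_congr rfl fun p hp => Nat.sub_add_cancel
        (mem_Ico.1 ((mem_decoratedPartitions.1 hP).2.1 p hp)).2.le
    rw [prod_mul_distrib, prod_pow_eq_pow_sum, prod_pow_eq_pow_sum, coeff_X_zero_pow_mul_X_one_pow]
    exact if_congr (by omega) rfl rfl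
  rw [partitionSum, coeff_sum, sum_congr rfl hmonomial, sum_boole,
    card_filter_decoratedPartitions_univ]

end CoefficientExtraction

/-- The Eulerian number `E_{k,l}` — the number of permutations of `{1,…,k+l-1}` with `k`
ascents and `l` descents in the zero-bordered word — equals the shifted multinomial
`N^{(-1)}_{k,l}`. -/
theorem eulerian_eq_shifted_multinomial (k l : ℕ) (hk : 1 ≤ k) (hl : 1 ≤ l) :
    Nat.card {π : Equiv.Perm (Fin (k + l - 1)) // ascCount π = k ∧ descCount π = l} =
      Nshift k l (-1) := by
  let x : MvPolynomial (Fin 2) ℚ := MvPolynomial.X 0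
  let y : MvPolynomial (Fin 2) ℚ := MvPolynomial.X 1
  let δ := MvPolynomial.mkDerivation ℚ fun _ : Fin 2 => x * y
  have hx : δ x = x * y := MvPolynomial.mkDerivation_X ℚ _ 0
  have hy : δ y = x * y := MvPolynomial.mkDerivation_X ℚ _ 1
  have hxy : x ≠ y := MvPolynomial.X_injective.ne zero_ne_one
  have hpoly := eulerianPoly_eq_sum_partitionSum hx hy hxy (n := k + l - 1) (N := k + l)
    (S := (univ : Finset (Fin (k + l)))) (by omega) (by rw [card_fin]; omega) (by omega)
  have hcoeff := congrArg (MvPolynomial.coeff (Finsupp.single 0 k + Finsupp.single 1 l)) hpoly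
  simp only [MvPolynomial.coeff_sum, ← map_natCast (MvPolynomial.C (σ := Fin 2) (R := ℚ)),
    MvPolynomial.coeff_C_mul, x, y, coeff_eulerianPoly, coeff_partitionSum_univ] at hcoeff
  rw [Nshift_neg_one]
  exact_mod_cast hcoeff
end

section
/- The number of permutations of {1,...,n} whose family-registry decomposition has n_1 singlets and n_{(i,j)} families with i ascents and j descents (for each (i,j) with i,j ≥ 1) equals n!/(n_1!·Π (i+j)!^{n_{(i,j)}}) · (Σ n_{(i,j)})!/Π n_{(i,j)}!, and these numbers summed over all configurations with n_1 + Σ (i+j)·n_{(i,j)} = n equal n!. -/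
/-- A (stripped) registry on `{1,…,n}`: an ordered list of mutually disjoint families,
each a subset `F ⊆ {1,…,n}` with `|F| ≥ 2` together with its number of reds
`a ∈ {1,…,|F|-1}`. -/
def IsRegistry {n : ℕ} (L : List (Finset (Fin n) × ℕ)) : Prop :=
  L.Pairwise (fun p q => Disjoint p.1 q.1) ∧
  ∀ p ∈ L, 2 ≤ p.1.card ∧ 1 ≤ p.2 ∧ p.2 < p.1.card

/-- The multinomial weight of a configuration `c` (where `c (i,j)` is the number of
families with `i` ascents and `j` descents, and the number of singlets is
`n₁ = n - Σ (i+j)·c(i,j)`):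
`n!/(n₁!·Π (i+j)!^{c(i,j)}) · (Σ c(i,j))!/Π c(i,j)!`. -/
def configWeight (n : ℕ) (c : Fin (n + 1) × Fin (n + 1) → ℕ) : ℕ :=
  (n.factorial /
      ((n - ∑ p : Fin (n + 1) × Fin (n + 1), ((p.1 : ℕ) + (p.2 : ℕ)) * c p).factorial *
        ∏ p : Fin (n + 1) × Fin (n + 1), ((p.1 : ℕ) + (p.2 : ℕ)).factorial ^ c p)) *
    ((∑ p : Fin (n + 1) × Fin (n + 1), c p).factorial /
      ∏ p : Fin (n + 1) × Fin (n + 1), (c p).factorial)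

/-!
Removing the first family `F` of a registry on `S` leaves a registry on `S \ F`, and for each
bicolor type `(i, j)` there are `(|S|).choose (i + j)` choices of `F`. Hence the number `N m c` of
registries with configuration `c` on `m` elements satisfies
`N m c = ∑ t, m.choose |t| * N (m - |t|) (c - e_t)` for `c ≠ 0`. The weight obeys the same
recursion: `m.choose |t|` turns the block-choice factor of `c - e_t` into that of `c` for every `t`
alike, and what remains is Pascal's rule for multinomial coefficients.

The number `R m` of all registries satisfies `R m = 1 + ∑ k, m.choose k * ((k - 1) * R (m - k))`,
a family of `k` elements having between `1` and `k - 1` reds; `R m = m!` solves this recursion.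
Sorting all registries by configuration gives the summation identity.
-/

open Finset
open scoped Nat Matrix

section BlockChoices

variable {ι : Type*} [Fintype ι] (s c : ι → ℕ)

/-- The number of ways to choose successively, among `m` elements, disjoint blocks whose sizes
are prescribed by a word in which each letter `i`, standing for a block of size `s i`, occurs
`c i` times. -/
def blockChoices (m : ℕ) : ℕ := m ! / ((m - s ⬝ᵥ c)! * ∏ i, (s i)! ^ c i)

variable {s c}

theorem factorial_mul_prod_factorial_pow_dvd {m : ℕ} (h : s ⬝ᵥ c ≤ m) :
    (m - s ⬝ᵥ c)! * ∏ i, (s i)! ^ c i ∣ m ! := by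
  have powers : ∏ i, (s i)! ^ c i ∣ ∏ i, (s i * c i)! :=
    prod_dvd_prod_of_dvd _ _ fun i _ => by
      simpa [mul_comm] using Nat.prod_factorial_dvd_factorial_sum (range (c i)) fun _ => s i
  calc (m - s ⬝ᵥ c)! * ∏ i, (s i)! ^ c i
      ∣ (m - s ⬝ᵥ c)! * (s ⬝ᵥ c)! :=
        mul_dvd_mul_left _ (powers.trans (Nat.prod_factorial_dvd_factorial_sum _ _))
    _ ∣ m ! := by
        rw [mul_comm]
        exact Nat.factorial_mul_factorial_dvd_factorial h

theorem blockChoices_zero (m : ℕ) : blockChoices s 0 m = 1 := by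
  simp [blockChoices, Nat.div_self m.factorial_pos]

end BlockChoices

theorem sub_single_add_single {ι : Type*} [DecidableEq ι] {c : ι → ℕ} {t : ι} (ht : c t ≠ 0) :
    c - Pi.single t 1 + Pi.single t 1 = c := by
  refine tsub_add_cancel_of_le fun i => ?_
  obtain rfl | hi := eq_or_ne i t
  · simpa using Nat.one_le_iff_ne_zero.2 ht
  · simp [hi]

section AddSingle

variable {ι : Type*} [Fintype ι] [DecidableEq ι] (c : ι → ℕ) (t : ι)

theorem sum_add_single : ∑ i, (c + Pi.single t 1 : ι → ℕ) i = ∑ i, c i + 1 := by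
  simp [sum_add_distrib]

theorem prod_pow_add_single {M : Type*} [CommMonoid M] (f : ι → M) :
    ∏ i, f i ^ (c + Pi.single t 1 : ι → ℕ) i = f t * ∏ i, f i ^ c i := by
  simp only [Pi.add_apply, pow_add, prod_mul_distrib, Pi.single_apply, pow_ite, pow_one, pow_zero,
    prod_ite_eq', mem_univ, if_true, mul_comm]

theorem prod_factorial_add_single :
    ∏ i, ((c + Pi.single t 1 : ι → ℕ) i)! = (c t + 1) * ∏ i, (c i)! := by
  rw [← mul_prod_erase _ _ (mem_univ t), ← mul_prod_erase univ (fun i => (c i)!) (mem_univ t)]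
  have off_t : ∏ i ∈ univ.erase t, ((c + Pi.single t 1 : ι → ℕ) i)! = ∏ i ∈ univ.erase t, (c i)! :=
    prod_congr rfl fun i hi => by simp [ne_of_mem_erase hi]
  rw [off_t]
  simp [Nat.factorial_succ, mul_assoc]

theorem succ_mul_multinomial_add_single :
    (c t + 1) * Nat.multinomial univ (c + Pi.single t 1) =
      (∑ i, c i + 1) * Nat.multinomial univ c := by
  have pos : 0 < ∏ i, (c i)! := prod_pos fun i _ => (c i).factorial_pos
  refine Nat.eq_of_mul_eq_mul_left pos ?_
  calc (∏ i, (c i)!) * ((c t + 1) * Nat.multinomial univ (c + Pi.single t 1))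
      = (∑ i, c i + 1)! := by
        rw [← sum_add_single c t, ← Nat.multinomial_spec, prod_factorial_add_single]; ring
    _ = (∏ i, (c i)!) * ((∑ i, c i + 1) * Nat.multinomial univ c) := by
        rw [Nat.factorial_succ, ← Nat.multinomial_spec]; ring

variable {c} in
theorem multinomial_eq_sum_sub_single (hc : c ≠ 0) :
    Nat.multinomial univ c =
      ∑ t with c t ≠ 0, Nat.multinomial univ (c - Pi.single t 1) := by
  have pos : 0 < ∑ i, c i := by
    obtain ⟨t, ht⟩ := Function.ne_iff.1 hc
    exact sum_pos' (fun _ _ => Nat.zero_le _) ⟨t, mem_univ t, Nat.pos_of_ne_zero ht⟩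
  refine Nat.eq_of_mul_eq_mul_left pos ?_
  have term (t : ι) (ht : c t ≠ 0) :
      c t * Nat.multinomial univ c =
        (∑ i, c i) * Nat.multinomial univ (c - Pi.single t 1) := by
    have key := succ_mul_multinomial_add_single (c - Pi.single t 1) t
    rw [← sum_add_single _ t, sub_single_add_single ht] at key
    simpa [Nat.sub_add_cancel (Nat.one_le_iff_ne_zero.2 ht)] using key
  rw [mul_sum, ← sum_congr rfl fun t ht => term t (mem_filter.1 ht).2, ← sum_mul,
    sum_filter_ne_zero]

variable {s c : ι → ℕ}

theorem blockChoices_add_single {m : ℕ} (h : s ⬝ᵥ c + s t ≤ m) :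
    blockChoices s (c + Pi.single t 1) m = m.choose (s t) * blockChoices s c (m - s t) := by
  have ht : s t ≤ m := by lia
  have dvd := factorial_mul_prod_factorial_pow_dvd (Nat.le_sub_of_add_le h)
  rw [blockChoices, dotProduct_add, dotProduct_single_one, prod_pow_add_single,
    blockChoices, ← Nat.mul_div_assoc _ dvd,
    ← Nat.choose_mul_factorial_mul_factorial ht, Nat.add_comm _ (s t), Nat.sub_add_eq,
    ← Nat.mul_div_mul_left (m.choose (s t) * (m - s t)!) _ (s t).factorial_pos]
  congr 1 <;> ring

theorem blockChoices_mul_multinomial_eq_sum {m : ℕ} (hc : c ≠ 0) (h : s ⬝ᵥ c ≤ m) :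
    blockChoices s c m * Nat.multinomial univ c = ∑ t with c t ≠ 0, m.choose (s t) *
      (blockChoices s (c - Pi.single t 1) (m - s t) *
        Nat.multinomial univ (c - Pi.single t 1)) := by
  rw [multinomial_eq_sum_sub_single hc, mul_sum]
  refine sum_congr rfl fun t ht => ?_
  have cancel := sub_single_add_single (mem_filter.1 ht).2
  rw [← mul_assoc, ← blockChoices_add_single t, cancel]
  rwa [← dotProduct_single_one s t, ← dotProduct_add, cancel]

end AddSingle

theorem one_add_sum_choose_mul_pred_mul_factorial (m : ℕ) :
    1 + ∑ k ∈ range (m + 1), m.choose k * ((k - 1) * (m - k)!) = m ! := by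
  induction m with
  | zero => simp
  | succ m ih =>
    have term (k : ℕ) (hk : k ∈ range (m + 1)) :
        (m + 1).choose k * ((k - 1) * (m + 1 - k)!) =
          (m + 1) * (m.choose k * ((k - 1) * (m - k)!)) := by
      have hk : k ≤ m := Nat.lt_succ_iff.1 (mem_range.1 hk)
      have pascal := Nat.choose_mul_succ_eq m k
      rw [Nat.succ_sub hk, Nat.factorial_succ]
      rw [Nat.succ_sub hk] at pascal
      calc (m + 1).choose k * ((k - 1) * ((m - k + 1) * (m - k)!))
          = ((m + 1).choose k * (m - k + 1)) * ((k - 1) * (m - k)!) := by ring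
        _ = (m + 1) * (m.choose k * ((k - 1) * (m - k)!)) := by rw [← pascal]; ring
    rw [sum_range_succ, sum_congr rfl term, ← mul_sum, Nat.factorial_succ, ← ih]
    simp only [Nat.choose_self, Nat.sub_self, Nat.factorial_zero, mul_one, one_mul,
      Nat.add_sub_cancel]
    ring

section Registries

variable {n : ℕ}

/-- The families inside `S`, each a subset of `S` with its number of reds. The factor `range n` only
makes the set finite, as a subset of `Fin n` has at most `n` elements. -/
def families (S : Finset (Fin n)) : Finset (Finset (Fin n) × ℕ) :=
  {p ∈ S.powerset ×ˢ range n | 1 ≤ p.2 ∧ p.2 < #p.1}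

variable {S : Finset (Fin n)} {p : Finset (Fin n) × ℕ} {L : List (Finset (Fin n) × ℕ)}
  {t : Fin (n + 1) × Fin (n + 1)}

theorem mem_families : p ∈ families S ↔ p.1 ⊆ S ∧ 1 ≤ p.2 ∧ p.2 < #p.1 := by
  have := card_finset_fin_le p.1
  simp only [families, mem_filter, mem_product, mem_powerset, mem_range]
  grind

theorem card_sdiff_of_mem_families (hp : p ∈ families S) : #(S \ p.1) = #S - #p.1 :=
  card_sdiff_of_subset (mem_families.1 hp).1

theorem sdiff_ssubset_of_mem_families (hp : p ∈ families S) : S \ p.1 ⊂ S := by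
  obtain ⟨hS, h1, h2⟩ := mem_families.1 hp
  exact sdiff_ssubset hS (card_pos.1 (by lia))

theorem sum_families {M : Type*} [AddCommMonoid M] (S : Finset (Fin n))
    (f : Finset (Fin n) × ℕ → M) :
    ∑ p ∈ families S, f p = ∑ F ∈ S.powerset, ∑ a ∈ Ico 1 #F, f (F, a) :=
  sum_finset_product _ _ _ fun p => by simp [mem_families]

/-- The registries all of whose families lie in `S`. -/
def registriesOn (S : Finset (Fin n)) : Finset (List (Finset (Fin n) × ℕ)) :=
  insert [] ((families S).attach.biUnion fun p => (registriesOn (S \ p.1.1)).image (p.1 :: ·))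
termination_by #S
decreasing_by exact card_lt_card (sdiff_ssubset_of_mem_families p.2)

theorem nil_mem_registriesOn : [] ∈ registriesOn S := by
  rw [registriesOn]
  exact mem_insert_self _ _

theorem cons_mem_registriesOn :
    p :: L ∈ registriesOn S ↔ p ∈ families S ∧ L ∈ registriesOn (S \ p.1) := by
  rw [registriesOn, mem_insert, or_iff_right (List.cons_ne_nil _ _)]
  simp only [mem_biUnion, mem_attach, true_and, mem_image, List.cons.injEq]
  constructor
  · rintro ⟨⟨p, hp⟩, L, hL, rfl, rfl⟩
    exact ⟨hp, hL⟩
  · rintro ⟨hp, hL⟩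
    exact ⟨⟨p, hp⟩, L, hL, rfl, rfl⟩

theorem isRegistry_cons :
    IsRegistry (p :: L) ↔
      (∀ q ∈ L, Disjoint p.1 q.1) ∧ (1 ≤ p.2 ∧ p.2 < #p.1) ∧ IsRegistry L := by
  simp only [IsRegistry, List.pairwise_cons, List.forall_mem_cons]
  grind

theorem mem_registriesOn : L ∈ registriesOn S ↔ IsRegistry L ∧ ∀ p ∈ L, p.1 ⊆ S := by
  induction L generalizing S with
  | nil => simp [nil_mem_registriesOn, IsRegistry]
  | cons p L ih =>
    simp only [cons_mem_registriesOn, mem_families, ih, isRegistry_cons, List.forall_mem_cons,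
      subset_sdiff, disjoint_comm (a := p.1)]
    grind

theorem sum_registriesOn {M : Type*} [AddCommMonoid M] (S : Finset (Fin n))
    (g : List (Finset (Fin n) × ℕ) → M) :
    ∑ L ∈ registriesOn S, g L =
      g [] + ∑ p ∈ families S, ∑ L ∈ registriesOn (S \ p.1), g (p :: L) := by
  have disjoint_heads : ((families S).attach : Set (families S)).PairwiseDisjoint
      fun p => (registriesOn (S \ p.1.1)).image (p.1 :: ·) := by
    intro p _ q _ hpq
    simp only [Function.onFun, disjoint_left, mem_image]
    rintro _ ⟨L, -, rfl⟩ ⟨L', -, h⟩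
    exact hpq (Subtype.ext (List.cons.inj h).1.symm)
  rw [registriesOn, sum_insert (by simp), sum_biUnion disjoint_heads,
    ← sum_attach (families S)]
  simp only [sum_image List.cons_injective.injOn]

theorem card_registriesOn (S : Finset (Fin n)) : #(registriesOn S) = (#S)! := by
  induction S using Finset.strongInduction with
  | H S ih =>
    calc #(registriesOn S)
        = 1 + ∑ p ∈ families S, #(registriesOn (S \ p.1)) := by
          simp only [card_eq_sum_ones, sum_registriesOn S]
      _ = 1 + ∑ p ∈ families S, (#S - #p.1)! := by
          congr! 2 with p hp
          rw [ih _ (sdiff_ssubset_of_mem_families hp), card_sdiff_of_mem_families hp]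
      _ = 1 + ∑ F ∈ S.powerset, (#F - 1) * (#S - #F)! := by
          simp [sum_families]
      _ = (#S)! := by
          rw [sum_powerset_apply_card fun k => (k - 1) * (#S - k)!]
          exact one_add_sum_choose_mul_pred_mul_factorial #S

/-- The number of elements of a family with `t.1` reds and `t.2` blues. -/
def typeSize (t : Fin (n + 1) × Fin (n + 1)) : ℕ := t.1 + t.2

/-- The bicolor type (number of reds, number of blues) of a family. Both numbers are at most `n`,
so that reducing them modulo `n + 1` loses nothing. -/
def bicolorType (p : Finset (Fin n) × ℕ) : Fin (n + 1) × Fin (n + 1) :=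
  (Fin.ofNat (n + 1) p.2, Fin.ofNat (n + 1) (#p.1 - p.2))

/-- The configuration of a registry: how many families of each bicolor type it has. -/
def configuration (L : List (Finset (Fin n) × ℕ)) (t : Fin (n + 1) × Fin (n + 1)) : ℕ :=
  (L.filter fun p => p.2 = (t.1 : ℕ) ∧ #p.1 = (t.1 : ℕ) + (t.2 : ℕ)).length

theorem bicolorType_eq_iff (hp : p ∈ families S) :
    bicolorType p = t ↔ p.2 = (t.1 : ℕ) ∧ #p.1 = (t.1 : ℕ) + (t.2 : ℕ) := by
  obtain ⟨-, -, hlt⟩ := mem_families.1 hp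
  have hle := card_finset_fin_le p.1
  rw [bicolorType, Prod.ext_iff, Fin.ext_iff, Fin.ext_iff, Fin.val_ofNat, Fin.val_ofNat,
    Nat.mod_eq_of_lt (by lia), Nat.mod_eq_of_lt (by lia)]
  lia

theorem typeSize_bicolorType (hp : p ∈ families S) : typeSize (bicolorType p) = #p.1 :=
  ((bicolorType_eq_iff hp).1 rfl).2.symm

theorem one_le_bicolorType (hp : p ∈ families S) :
    1 ≤ ((bicolorType p).1 : ℕ) ∧ 1 ≤ ((bicolorType p).2 : ℕ) := by
  have := (bicolorType_eq_iff hp).1 rfl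
  have := mem_families.1 hp
  lia

theorem filter_bicolorType_eq_image (ht : 1 ≤ (t.1 : ℕ) ∧ 1 ≤ (t.2 : ℕ)) :
    {p ∈ families S | bicolorType p = t} =
      (S.powersetCard (typeSize t)).image fun F => (F, (t.1 : ℕ)) := by
  ext ⟨F, a⟩
  rw [mem_filter, and_congr_right fun hp => bicolorType_eq_iff hp]
  simp only [mem_families, mem_image, mem_powersetCard, Prod.mk.injEq, typeSize]
  grind

theorem card_filter_bicolorType_eq (ht : 1 ≤ (t.1 : ℕ) ∧ 1 ≤ (t.2 : ℕ)) :
    #{p ∈ families S | bicolorType p = t} = (#S).choose (typeSize t) := by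
  rw [filter_bicolorType_eq_image ht, card_image_of_injective _ (Prod.mk_left_injective _),
    card_powersetCard]

theorem sum_families_bicolorType {h : Fin (n + 1) × Fin (n + 1) → ℕ}
    (hh : ∀ t, h t ≠ 0 → 1 ≤ (t.1 : ℕ) ∧ 1 ≤ (t.2 : ℕ)) :
    ∑ p ∈ families S, h (bicolorType p) = ∑ t, (#S).choose (typeSize t) * h t := by
  rw [← sum_fiberwise' (families S) bicolorType h]
  refine sum_congr rfl fun t _ => ?_
  obtain ht | ht := eq_or_ne (h t) 0
  · simp [ht]
  · simp [card_filter_bicolorType_eq (hh t ht)]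

theorem configuration_nil : configuration ([] : List (Finset (Fin n) × ℕ)) = 0 := rfl

theorem configuration_cons (hp : p ∈ families S) :
    configuration (p :: L) = configuration L + Pi.single (bicolorType p) 1 := by
  ext t
  simp only [configuration, List.filter_cons, ← bicolorType_eq_iff hp, Pi.add_apply,
    Pi.single_apply, eq_comm (a := t)]
  split_ifs <;> simp_all

/-- `c` is a configuration of a set of `m` elements: it counts only types with at least one red and
one blue, and its families have at most `m` elements altogether. -/
def IsConfiguration (m : ℕ) (c : Fin (n + 1) × Fin (n + 1) → ℕ) : Prop :=
  (∀ t, c t ≠ 0 → 1 ≤ (t.1 : ℕ) ∧ 1 ≤ (t.2 : ℕ)) ∧ typeSize ⬝ᵥ c ≤ m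

variable {c : Fin (n + 1) × Fin (n + 1) → ℕ}

namespace IsConfiguration

variable {m : ℕ}

theorem sub_single (hc : IsConfiguration m c) (ht : c t ≠ 0) :
    IsConfiguration (m - typeSize t) (c - Pi.single t 1) := by
  refine ⟨fun u hu => hc.1 u fun h => hu (by simp [h]), Nat.le_sub_of_add_le ?_⟩
  rw [← dotProduct_single_one typeSize t, ← dotProduct_add, sub_single_add_single ht]
  exact hc.2

theorem apply_le (hc : IsConfiguration m c) (t : Fin (n + 1) × Fin (n + 1)) : c t ≤ m := by
  obtain ht | ht := eq_or_ne (c t) 0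
  · simp [ht]
  · have size_pos : 0 < typeSize t := Nat.add_pos_left (hc.1 t ht).1 _
    calc c t ≤ typeSize t * c t := Nat.le_mul_of_pos_left _ size_pos
      _ ≤ typeSize ⬝ᵥ c :=
          single_le_sum (f := fun t => typeSize t * c t) (fun _ _ => Nat.zero_le _) (mem_univ t)
      _ ≤ m := hc.2

end IsConfiguration

theorem one_le_of_configuration_ne_zero (hL : L ∈ registriesOn S)
    (ht : configuration L t ≠ 0) : 1 ≤ (t.1 : ℕ) ∧ 1 ≤ (t.2 : ℕ) := by
  induction L generalizing S with
  | nil => exact absurd rfl ht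
  | cons p L ih =>
    obtain ⟨hp, hL⟩ := cons_mem_registriesOn.1 hL
    obtain rfl | hne := eq_or_ne t (bicolorType p)
    · exact one_le_bicolorType hp
    · exact ih hL (by simpa [configuration_cons hp, hne] using ht)

theorem typeSize_dotProduct_configuration_le (hL : L ∈ registriesOn S) :
    typeSize ⬝ᵥ configuration L ≤ #S := by
  induction L generalizing S with
  | nil => simp [configuration_nil]
  | cons p L ih =>
    obtain ⟨hp, hL⟩ := cons_mem_registriesOn.1 hL
    have rest := ih hL
    have := card_le_card (mem_families.1 hp).1
    rw [card_sdiff_of_mem_families hp] at rest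
    rw [configuration_cons hp, dotProduct_add, dotProduct_single_one, typeSize_bicolorType hp]
    lia

theorem isConfiguration_configuration (hL : L ∈ registriesOn S) :
    IsConfiguration #S (configuration L) :=
  ⟨fun _ => one_le_of_configuration_ne_zero hL, typeSize_dotProduct_configuration_le hL⟩

theorem configuration_cons_eq_iff (hp : p ∈ families S) :
    configuration (p :: L) = c ↔
      c (bicolorType p) ≠ 0 ∧ configuration L = c - Pi.single (bicolorType p) 1 := by
  rw [configuration_cons hp]
  constructor
  · rintro rfl
    simp
  · rintro ⟨ht, hL⟩
    rw [hL, sub_single_add_single ht]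

theorem card_filter_configuration_eq_add_sum (c : Fin (n + 1) × Fin (n + 1) → ℕ) :
    #{L ∈ registriesOn S | configuration L = c} = (if c = 0 then 1 else 0) +
      ∑ p ∈ families S with c (bicolorType p) ≠ 0,
        #{L ∈ registriesOn (S \ p.1) | configuration L = c - Pi.single (bicolorType p) 1} := by
  rw [card_filter, sum_registriesOn, configuration_nil, sum_filter]
  congr 1
  · simp only [eq_comm]
  · refine sum_congr rfl fun p hp => ?_
    simp only [configuration_cons_eq_iff hp, ite_and, card_filter]
    split_ifs <;> simp

theorem card_filter_configuration_eq (hc : IsConfiguration #S c) :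
    #{L ∈ registriesOn S | configuration L = c} =
      blockChoices typeSize c #S * Nat.multinomial univ c := by
  induction S using Finset.strongInduction generalizing c with
  | H S ih =>
    rw [card_filter_configuration_eq_add_sum]
    obtain rfl | hne := eq_or_ne c 0
    · simp [blockChoices_zero, Nat.multinomial]
    let rest (t : Fin (n + 1) × Fin (n + 1)) : ℕ :=
      blockChoices typeSize (c - Pi.single t 1) (#S - typeSize t) *
        Nat.multinomial univ (c - Pi.single t 1)
    have tail (p) (hp : p ∈ families S) (ht : c (bicolorType p) ≠ 0) :
        #{L ∈ registriesOn (S \ p.1) | configuration L = c - Pi.single (bicolorType p) 1} =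
          rest (bicolorType p) := by
      have card := card_sdiff_of_mem_families hp
      rw [← typeSize_bicolorType hp] at card
      rw [ih _ (sdiff_ssubset_of_mem_families hp) (card ▸ hc.sub_single ht), card]
    calc (if c = 0 then 1 else 0) + ∑ p ∈ families S with c (bicolorType p) ≠ 0,
          #{L ∈ registriesOn (S \ p.1) | configuration L = c - Pi.single (bicolorType p) 1}
        = ∑ p ∈ families S, if c (bicolorType p) ≠ 0 then rest (bicolorType p) else 0 := by
          rw [if_neg hne, zero_add, sum_filter]
          exact sum_congr rfl fun p hp => if_ctx_congr Iff.rfl (tail p hp) fun _ => rfl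
      _ = ∑ t, (#S).choose (typeSize t) * if c t ≠ 0 then rest t else 0 :=
          sum_families_bicolorType fun t ht => hc.1 t (ite_ne_right_iff.1 ht).1
      _ = blockChoices typeSize c #S * Nat.multinomial univ c := by
          rw [blockChoices_mul_multinomial_eq_sum hne hc.2, sum_filter]
          simp only [mul_ite, mul_zero, rest]

theorem mem_registriesOn_univ : L ∈ registriesOn univ ↔ IsRegistry L := by
  simp [mem_registriesOn]

theorem card_filter_configuration_eq_configWeight (hc : IsConfiguration n c) :
    #{L ∈ registriesOn univ | configuration L = c} = configWeight n c := by
  rw [card_filter_configuration_eq (by simpa using hc), card_univ, Fintype.card_fin]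
  rfl

theorem sum_configWeight {D : Finset (Fin (n + 1) × Fin (n + 1) → ℕ)}
    (hD : ∀ c, c ∈ D ↔ IsConfiguration n c) : ∑ c ∈ D, configWeight n c = n ! := by
  have mapsTo (L) (hL : L ∈ registriesOn (univ : Finset (Fin n))) : configuration L ∈ D :=
    (hD _).2 (by simpa using isConfiguration_configuration hL)
  calc ∑ c ∈ D, configWeight n c
      = ∑ c ∈ D, #{L ∈ registriesOn univ | configuration L = c} :=
        sum_congr rfl fun c hc =>
          (card_filter_configuration_eq_configWeight ((hD c).1 hc)).symm
    _ = #(registriesOn (univ : Finset (Fin n))) := (card_eq_sum_card_fiberwise mapsTo).symm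
    _ = n ! := by rw [card_registriesOn, card_univ, Fintype.card_fin]

end Registries

/-- The number of permutations of `{1,…,n}` (equivalently, by the structure theorem, of
registries) whose family decomposition has, for each `i, j ≥ 1`, exactly `c (i,j)`
families with `i` ascents and `j` descents (hence `n - Σ (i+j)·c(i,j)` singlets) is
`n!/(n₁!·Π(i+j)!^{c(i,j)}) · (Σc)!/Πc!`, and these weights summed over all
configurations with `n₁ + Σ (i+j)·c(i,j) = n` add up to `n!`. -/
theorem family_statistics (n : ℕ) :
    (∀ c : Fin (n + 1) × Fin (n + 1) → ℕ,
      (∀ p, c p ≠ 0 → 1 ≤ (p.1 : ℕ) ∧ 1 ≤ (p.2 : ℕ)) →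
      (∑ p : Fin (n + 1) × Fin (n + 1), ((p.1 : ℕ) + (p.2 : ℕ)) * c p) ≤ n →
      Nat.card {L : List (Finset (Fin n) × ℕ) // IsRegistry L ∧
          ∀ i j : Fin (n + 1),
            (L.filter (fun p => p.2 = (i : ℕ) ∧ p.1.card = (i : ℕ) + (j : ℕ))).length =
              c (i, j)} = configWeight n c) ∧
    (∑ c ∈ ((Finset.univ : Finset (Fin (n + 1) × Fin (n + 1) → Fin (n + 1))).filter
        (fun c => (∀ p, (c p : ℕ) ≠ 0 → 1 ≤ (p.1 : ℕ) ∧ 1 ≤ (p.2 : ℕ)) ∧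
          (∑ p : Fin (n + 1) × Fin (n + 1), ((p.1 : ℕ) + (p.2 : ℕ)) * (c p : ℕ)) ≤ n)),
      configWeight n (fun p => (c p : ℕ))) = n.factorial := by
  refine ⟨fun c hc hn => ?_, ?_⟩
  · rw [← card_filter_configuration_eq_configWeight ⟨hc, hn⟩]
    refine Nat.subtype_card _ fun L => ?_
    simp only [mem_filter, mem_registriesOn_univ, funext_iff, Prod.forall, configuration]
  · have coe_injective : Function.Injective
        fun (c : Fin (n + 1) × Fin (n + 1) → Fin (n + 1)) p => (c p : ℕ) :=
      Fin.val_injective.comp_left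
    rw [← sum_image (f := configWeight n) coe_injective.injOn]
    refine sum_configWeight fun c => ⟨fun hc => ?_, fun hc => ?_⟩
    · obtain ⟨d, hd, rfl⟩ := mem_image.1 hc
      exact (mem_filter.1 hd).2
    · exact mem_image.2 ⟨fun p => ⟨c p, Nat.lt_succ_of_le (hc.apply_le p)⟩,
        mem_filter.2 ⟨mem_univ _, hc⟩, rfl⟩
end
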